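/- arXiv:2303.06971 — 6 statements merged into one kernel-verified Lean document; each statement's English description precedes it below -/
import Mathlib

section
/- Let A ⊆ E, let x, y ∈ A, and let S ⊆ A be a set such that every absolutely continuous path φ : [0,T] → A (any T > 0) with φ(0) = x and φ(T) = y passes through S, i.e. φ(t) ∈ S for some t ∈ [0,T]. Then V_A(x,y) = inf_{z ∈ S} [ V_A(x,z) + V_A(z,y) ] (as an identity in [0,+∞]). -/
/-!
The infimum defining `quasiPot` is over triples (path, derivative, duration), and everything rests
on the additivity of the action under cutting a path at an intermediate time
(`pathEnergy_split`).

* `≤` holds for every `z`: a path from `x` to `z` followed by one from `z` to `y` is a path from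
  `x` to `y` whose action is the sum of the two (`quasiPot_triangle`).
* `≥`: a path from `x` to `y` meets `S` at some time `t`. If `0 < t < T`, cutting at `t` produces
  competitors for `V_A(x, φ t)` and `V_A(φ t, y)`. If `t` is an endpoint, then `x ∈ S` or `y ∈ S`,
  and one of the two halves has no positive duration; the missing term is `V_A(x, x)` or
  `V_A(y, y)`, which vanishes because waiting at a point for a short time costs little
  (`quasiPot_self`).
-/

open MeasureTheory
open scoped RealInnerProductSpace ENNReal

/-- The Freidlin–Wentzell action `S_{0,T}(φ) = ½ ∫_{[0,T]} ‖g(s) - b(φ(s))‖² ds ∈ [0,+∞]`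
of a path `φ` with derivative `g`. -/
noncomputable def pathEnergy {d : ℕ}
    (b : EuclideanSpace ℝ (Fin d) → EuclideanSpace ℝ (Fin d))
    (φ g : ℝ → EuclideanSpace ℝ (Fin d)) (T : ℝ) : ℝ≥0∞ :=
  (∫⁻ s in Set.Icc (0 : ℝ) T, ENNReal.ofReal (‖g s - b (φ s)‖ ^ 2)) / 2

/-- The quasi-potential `V_A(x, y) ∈ [0, +∞]`: the infimum of the action `S_{0,T}(φ)` over
all `T > 0` and all absolutely continuous paths `φ : [0,T] → A` (with integrable derivative
`g`) such that `φ 0 = x` and `φ T = y`; it is `+∞` when no such path exists. -/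
noncomputable def quasiPot {d : ℕ}
    (b : EuclideanSpace ℝ (Fin d) → EuclideanSpace ℝ (Fin d))
    (A : Set (EuclideanSpace ℝ (Fin d))) (x y : EuclideanSpace ℝ (Fin d)) : ℝ≥0∞ :=
  ⨅ (T : ℝ) (_ : 0 < T) (φ : ℝ → EuclideanSpace ℝ (Fin d))
    (g : ℝ → EuclideanSpace ℝ (Fin d))
    (_ : IntegrableOn g (Set.Icc (0 : ℝ) T))
    (_ : ∀ t ∈ Set.Icc (0 : ℝ) T, φ t = x + ∫ s in (0 : ℝ)..t, g s)
    (_ : ∀ t ∈ Set.Icc (0 : ℝ) T, φ t ∈ A)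
    (_ : φ T = y),
    pathEnergy b φ g T

/-- `φ` is an absolutely continuous path in `A` from `x` to `y` over `[0, T]`, `T > 0`, with
integrable derivative `g`. -/
structure IsPathIn {d : ℕ} (A : Set (EuclideanSpace ℝ (Fin d))) (x y : EuclideanSpace ℝ (Fin d))
    (φ g : ℝ → EuclideanSpace ℝ (Fin d)) (T : ℝ) : Prop where
  pos : 0 < T
  int : IntegrableOn g (Set.Icc (0 : ℝ) T)
  eq : ∀ t ∈ Set.Icc (0 : ℝ) T, φ t = x + ∫ s in (0 : ℝ)..t, g s
  mem : ∀ t ∈ Set.Icc (0 : ℝ) T, φ t ∈ A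
  fin : φ T = y

section helpers

variable {d : ℕ} {b : EuclideanSpace ℝ (Fin d) → EuclideanSpace ℝ (Fin d)}
  {A : Set (EuclideanSpace ℝ (Fin d))} {x y z : EuclideanSpace ℝ (Fin d)}
  {φ g : ℝ → EuclideanSpace ℝ (Fin d)} {T t : ℝ}

lemma quasiPot_le (h : IsPathIn A x y φ g T) : quasiPot b A x y ≤ pathEnergy b φ g T := by
  unfold quasiPot
  exact iInf_le_of_le T <| iInf_le_of_le h.pos <| iInf_le_of_le φ <| iInf_le_of_le g <|
    iInf_le_of_le h.int <| iInf_le_of_le h.eq <| iInf_le_of_le h.mem <| iInf_le _ h.fin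

lemma le_quasiPot {c : ℝ≥0∞}
    (h : ∀ T φ g, IsPathIn A x y φ g T → c ≤ pathEnergy b φ g T) : c ≤ quasiPot b A x y := by
  unfold quasiPot
  exact le_iInf fun T => le_iInf fun h0 => le_iInf fun φ => le_iInf fun g => le_iInf fun h1 =>
    le_iInf fun h2 => le_iInf fun h3 => le_iInf fun h4 => h T φ g ⟨h0, h1, h2, h3, h4⟩

lemma pathEnergy_eq_Ioc (b : EuclideanSpace ℝ (Fin d) → EuclideanSpace ℝ (Fin d))
    (φ g : ℝ → EuclideanSpace ℝ (Fin d)) (T : ℝ) :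
    pathEnergy b φ g T
      = (∫⁻ s in Set.Ioc (0 : ℝ) T, ENNReal.ofReal (‖g s - b (φ s)‖ ^ 2)) / 2 := by
  rw [pathEnergy, Measure.restrict_congr_set Ioc_ae_eq_Icc]

lemma pathEnergy_congr {φ' g' : ℝ → EuclideanSpace ℝ (Fin d)}
    (hφ : ∀ s ∈ Set.Ioc (0 : ℝ) T, φ s = φ' s) (hg : ∀ s ∈ Set.Ioc (0 : ℝ) T, g s = g' s) :
    pathEnergy b φ g T = pathEnergy b φ' g' T := by
  rw [pathEnergy_eq_Ioc, pathEnergy_eq_Ioc]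
  congr 1
  refine setLIntegral_congr_fun measurableSet_Ioc fun s hs => ?_
  simp only [hφ s hs, hg s hs]

lemma setLIntegral_shift (F : ℝ → ℝ≥0∞) (t T : ℝ) :
    ∫⁻ s in Set.Ioc (0 : ℝ) (T - t), F (s + t) = ∫⁻ s in Set.Ioc t T, F s := by
  rw [← lintegral_indicator measurableSet_Ioc, ← lintegral_indicator measurableSet_Ioc,
    ← lintegral_add_right_eq_self ((Set.Ioc t T).indicator F) t]
  refine lintegral_congr fun s => ?_
  have : s ∈ Set.Ioc 0 (T - t) ↔ s + t ∈ Set.Ioc t T := by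
    simp only [Set.mem_Ioc]
    constructor <;> rintro ⟨h1, h2⟩ <;> constructor <;> linarith
  by_cases h : s ∈ Set.Ioc 0 (T - t)
  · rw [Set.indicator_of_mem h, Set.indicator_of_mem (this.1 h)]
  · rw [Set.indicator_of_notMem h, Set.indicator_of_notMem (fun hs => h (this.2 hs))]

/-- The action is additive under cutting at time `t`. The integrand need not be measurable, since
only the domain of integration is split. -/
lemma pathEnergy_split (b : EuclideanSpace ℝ (Fin d) → EuclideanSpace ℝ (Fin d))
    (φ g : ℝ → EuclideanSpace ℝ (Fin d)) (h0 : 0 ≤ t) (hT : t ≤ T) :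
    pathEnergy b φ g T = pathEnergy b φ g t
      + pathEnergy b (fun s => φ (s + t)) (fun s => g (s + t)) (T - t) := by
  simp only [pathEnergy_eq_Ioc]
  rw [setLIntegral_shift (fun s => ENNReal.ofReal (‖g s - b (φ s)‖ ^ 2)), ← ENNReal.add_div,
    ← lintegral_union measurableSet_Ioc (Set.Ioc_disjoint_Ioc_of_le le_rfl),
    Set.Ioc_union_Ioc_eq_Ioc h0 hT]

lemma integrableOn_shift_iff (g : ℝ → EuclideanSpace ℝ (Fin d)) (t T : ℝ) :
    IntegrableOn (fun s => g (s + t)) (Set.Icc 0 (T - t)) ↔ IntegrableOn g (Set.Icc t T) := by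
  have h2 := (measurePreserving_add_right (volume : Measure ℝ) t).integrableOn_comp_preimage
    (measurableEmbedding_addRight t) (f := g) (s := Set.Icc t T)
  rw [← h2]
  simp [Function.comp_def]

lemma IsPathIn.left (h : IsPathIn A x y φ g T) (h0 : 0 < t) (hT : t ≤ T) :
    IsPathIn A x (φ t) φ g t where
  pos := h0
  int := h.int.mono_set (Set.Icc_subset_Icc_right hT)
  eq s hs := h.eq s ⟨hs.1, hs.2.trans hT⟩
  mem s hs := h.mem s ⟨hs.1, hs.2.trans hT⟩
  fin := rfl

lemma intervalIntegrable_of_Icc {u v : ℝ} (h : IntegrableOn g (Set.Icc 0 T))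
    (hu : u ∈ Set.Icc 0 T) (hv : v ∈ Set.Icc 0 T) : IntervalIntegrable g volume u v := by
  rw [intervalIntegrable_iff]
  exact h.mono_set (Set.uIoc_subset_uIcc.trans (Set.uIcc_subset_Icc hu hv))

lemma IsPathIn.right (h : IsPathIn A x y φ g T) (h0 : 0 ≤ t) (hT : t < T) :
    IsPathIn A (φ t) y (fun s => φ (s + t)) (fun s => g (s + t)) (T - t) where
  pos := sub_pos.2 hT
  int := (integrableOn_shift_iff g t T).2 (h.int.mono_set (Set.Icc_subset_Icc_left h0))
  eq s hs := by
    have ht : t ∈ Set.Icc 0 T := ⟨h0, hT.le⟩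
    have hst : s + t ∈ Set.Icc 0 T := ⟨by linarith [hs.1], by linarith [hs.2]⟩
    have hz : (0 : ℝ) ∈ Set.Icc 0 T := ⟨le_rfl, h.pos.le⟩
    rw [h.eq _ hst, h.eq _ ht, intervalIntegral.integral_comp_add_right, zero_add, add_assoc,
      intervalIntegral.integral_add_adjacent_intervals (intervalIntegrable_of_Icc h.int hz ht)
        (intervalIntegrable_of_Icc h.int ht hst)]
  mem s hs := h.mem _ ⟨by linarith [hs.1], by linarith [hs.2]⟩
  fin := by simp [h.fin]

/-- The path `φ₁` up to time `T₁`, followed by `φ₂`; the derivatives are combined likewise. -/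
noncomputable def concat (T₁ : ℝ) (φ₁ φ₂ : ℝ → EuclideanSpace ℝ (Fin d)) (s : ℝ) :
    EuclideanSpace ℝ (Fin d) :=
  if s ≤ T₁ then φ₁ s else φ₂ (s - T₁)

lemma concat_of_le {T₁ s : ℝ} {φ₁ φ₂ : ℝ → EuclideanSpace ℝ (Fin d)} (h : s ≤ T₁) :
    concat T₁ φ₁ φ₂ s = φ₁ s := if_pos h

lemma concat_add {T₁ s : ℝ} {φ₁ φ₂ : ℝ → EuclideanSpace ℝ (Fin d)} (h : 0 < s) :
    concat T₁ φ₁ φ₂ (s + T₁) = φ₂ s := by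
  rw [concat, if_neg (by linarith), add_sub_cancel_right]

lemma IsPathIn.concat {φ₁ g₁ φ₂ g₂ : ℝ → EuclideanSpace ℝ (Fin d)} {T₁ T₂ : ℝ}
    (h₁ : IsPathIn A x z φ₁ g₁ T₁) (h₂ : IsPathIn A z y φ₂ g₂ T₂) :
    IsPathIn A x y (concat T₁ φ₁ φ₂) (concat T₁ g₁ g₂) (T₁ + T₂) := by
  have p₁ := h₁.pos
  have p₂ := h₂.pos
  have hint : IntegrableOn (_root_.concat T₁ g₁ g₂) (Set.Icc 0 (T₁ + T₂)) := by
    rw [← Set.Icc_union_Icc_eq_Icc p₁.le (by linarith : T₁ ≤ T₁ + T₂)]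
    refine IntegrableOn.union ?_ ?_
    · exact h₁.int.congr_fun (fun s hs => (concat_of_le hs.2).symm) measurableSet_Icc
    · rw [← integrableOn_shift_iff, add_sub_cancel_left,
        integrableOn_Icc_iff_integrableOn_Ioc]
      exact (h₂.int.mono_set Set.Ioc_subset_Icc_self).congr_fun
        (fun s hs => (concat_add hs.1).symm) measurableSet_Ioc
  -- Over `[0, T₁]` the integral of the derivative only sees `g₁`.
  have hleft : ∀ t ∈ Set.Icc 0 T₁, ∫ s in (0 : ℝ)..t, _root_.concat T₁ g₁ g₂ s
      = ∫ s in (0 : ℝ)..t, g₁ s := fun t ht =>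
    intervalIntegral.integral_congr fun s hs => by
      rw [Set.uIcc_of_le ht.1] at hs
      exact concat_of_le (hs.2.trans ht.2)
  refine ⟨by linarith, hint, fun t ht => ?_, fun t ht => ?_, ?_⟩
  · rcases le_or_gt t T₁ with h | h
    · rw [concat_of_le h, hleft t ⟨ht.1, h⟩, h₁.eq t ⟨ht.1, h⟩]
    · obtain ⟨s, rfl⟩ : ∃ s, t = s + T₁ := ⟨t - T₁, by ring⟩
      have hs : 0 < s := by linarith
      have hz : (0 : ℝ) ∈ Set.Icc 0 (T₁ + T₂) := ⟨le_rfl, by linarith⟩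
      have hm : T₁ ∈ Set.Icc 0 (T₁ + T₂) := ⟨p₁.le, by linarith⟩
      have hright : ∫ u in T₁..(s + T₁), _root_.concat T₁ g₁ g₂ u = ∫ u in (0 : ℝ)..s, g₂ u := by
        have := intervalIntegral.integral_comp_add_right (a := 0) (b := s)
          (_root_.concat T₁ g₁ g₂) T₁
        rw [zero_add] at this
        rw [← this, intervalIntegral.integral_of_le hs.le, intervalIntegral.integral_of_le hs.le]
        exact setIntegral_congr_fun measurableSet_Ioc fun u hu => concat_add hu.1
      have hT₁ : T₁ ∈ Set.Icc 0 T₁ := ⟨p₁.le, le_rfl⟩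
      rw [concat_add hs, ← intervalIntegral.integral_add_adjacent_intervals
        (intervalIntegrable_of_Icc hint hz hm) (intervalIntegrable_of_Icc hint hm ht), hright,
        hleft T₁ hT₁, ← add_assoc, ← h₁.eq T₁ hT₁, h₁.fin]
      exact h₂.eq s ⟨hs.le, by linarith [ht.2]⟩
  · rcases le_or_gt t T₁ with h | h
    · rw [concat_of_le h]
      exact h₁.mem t ⟨ht.1, h⟩
    · rw [_root_.concat, if_neg h.not_ge]
      exact h₂.mem _ ⟨by linarith, by linarith [ht.2]⟩
  · rw [add_comm, concat_add p₂, h₂.fin]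

lemma pathEnergy_concat {φ₁ g₁ φ₂ g₂ : ℝ → EuclideanSpace ℝ (Fin d)} {T₁ T₂ : ℝ}
    (h₁ : 0 ≤ T₁) (h₂ : 0 ≤ T₂) :
    pathEnergy b (concat T₁ φ₁ φ₂) (concat T₁ g₁ g₂) (T₁ + T₂)
      = pathEnergy b φ₁ g₁ T₁ + pathEnergy b φ₂ g₂ T₂ := by
  rw [pathEnergy_split b _ _ h₁ (by linarith : T₁ ≤ T₁ + T₂), add_sub_cancel_left]
  congr 1
  · exact pathEnergy_congr (fun s hs => concat_of_le hs.2) (fun s hs => concat_of_le hs.2)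
  · exact pathEnergy_congr (fun s hs => concat_add hs.1) (fun s hs => concat_add hs.1)

lemma quasiPot_triangle (b : EuclideanSpace ℝ (Fin d) → EuclideanSpace ℝ (Fin d))
    (A : Set (EuclideanSpace ℝ (Fin d))) (x y z : EuclideanSpace ℝ (Fin d)) :
    quasiPot b A x y ≤ quasiPot b A x z + quasiPot b A z y := by
  rw [← tsub_le_iff_right]
  refine le_quasiPot fun T₁ φ₁ g₁ h₁ => ?_
  rw [tsub_le_iff_right, ← tsub_le_iff_left]
  refine le_quasiPot fun T₂ φ₂ g₂ h₂ => ?_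
  rw [tsub_le_iff_left, ← pathEnergy_concat h₁.pos.le h₂.pos.le]
  exact quasiPot_le (h₁.concat h₂)

/-- Staying at `x` during time `T` costs `T ‖b x‖² / 2`, which tends to `0` with `T`. -/
lemma quasiPot_self (b : EuclideanSpace ℝ (Fin d) → EuclideanSpace ℝ (Fin d)) (hx : x ∈ A) :
    quasiPot b A x x = 0 := by
  have key : ∀ T : ℝ, 0 < T → quasiPot b A x x ≤ ENNReal.ofReal (‖b x‖ ^ 2 * T / 2) := by
    intro T hT
    refine (quasiPot_le (φ := fun _ => x) (g := fun _ => 0) (T := T)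
      ⟨hT, integrableOn_zero, by simp, fun _ _ => hx, rfl⟩).trans_eq ?_
    rw [ENNReal.ofReal_div_of_pos two_pos, ENNReal.ofReal_mul (by positivity)]
    simp [pathEnergy]
  have hlim : Filter.Tendsto (fun T : ℝ => ENNReal.ofReal (‖b x‖ ^ 2 * T / 2))
      (nhdsWithin 0 (Set.Ioi 0)) (nhds 0) := by
    have hc : Continuous (fun T : ℝ => ENNReal.ofReal (‖b x‖ ^ 2 * T / 2)) :=
      ENNReal.continuous_ofReal.comp (by fun_prop)
    simpa using (hc.tendsto 0).mono_left nhdsWithin_le_nhds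
  exact le_antisymm (ge_of_tendsto hlim (Filter.eventually_of_mem self_mem_nhdsWithin key)) bot_le

end helpers

/-- **Lemma 2.1, second item.** If every absolutely continuous path in `A` from `x` to `y`
passes through the set `S ⊆ A`, then
`V_A(x,y) = ⨅_{z ∈ S} (V_A(x,z) + V_A(z,y))`. -/
theorem stmt13 {d : ℕ}
    (f : EuclideanSpace ℝ (Fin d) → ℝ)
    (ℓ b : EuclideanSpace ℝ (Fin d) → EuclideanSpace ℝ (Fin d))
    (hf : ContDiff ℝ 1 f) (hl : Continuous ℓ)
    (hortho : ∀ x, ⟪ℓ x, gradient f x⟫ = 0)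
    (hb : b = fun x => -(gradient f x + ℓ x))
    (A S : Set (EuclideanSpace ℝ (Fin d)))
    (x y : EuclideanSpace ℝ (Fin d)) (hx : x ∈ A) (hy : y ∈ A) (hS : S ⊆ A)
    (hpass : ∀ T : ℝ, 0 < T → ∀ φ g : ℝ → EuclideanSpace ℝ (Fin d),
      IntegrableOn g (Set.Icc (0 : ℝ) T) →
      (∀ t ∈ Set.Icc (0 : ℝ) T, φ t = x + ∫ s in (0 : ℝ)..t, g s) →
      (∀ t ∈ Set.Icc (0 : ℝ) T, φ t ∈ A) → φ T = y →
      ∃ t ∈ Set.Icc (0 : ℝ) T, φ t ∈ S) :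
    quasiPot b A x y = ⨅ z ∈ S, (quasiPot b A x z + quasiPot b A z y) := by
  refine le_antisymm (le_iInf₂ fun z _ => quasiPot_triangle b A x y z) ?_
  refine le_quasiPot fun T φ g h => ?_
  obtain ⟨t, ht, hts⟩ := hpass T h.pos φ g h.int h.eq h.mem h.fin
  refine (iInf₂_le (φ t) hts).trans ?_
  rcases ht.1.eq_or_lt with rfl | h0
  · have hφ : φ 0 = x := by simpa using h.eq 0 ht
    rw [hφ, quasiPot_self b hx, zero_add]
    exact quasiPot_le h
  rcases ht.2.eq_or_lt with rfl | hT
  · rw [h.fin, quasiPot_self b hy, add_zero]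
    exact quasiPot_le h
  rw [pathEnergy_split b φ g h0.le hT.le]
  exact add_le_add (quasiPot_le (h.left h0 hT.le)) (quasiPot_le (h.right h0.le hT))
end

section
/- Assume in addition that f is twice continuously differentiable and ℓ is continuously differentiable. Let D ⊆ E, let x be a point of the closure cl(D), and let φ : [0,∞) → cl(D) satisfy φ(0) = x and φ'(t) = b(φ(t)) for all t ≥ 0, with φ(t) → y ∈ cl(D) as t → +∞. Assume moreover there exists r > 0 such that for every z ∈ cl(D) with ‖z − y‖ < r the straight segment from z to y is contained in cl(D). Then V_{cl(D)}(x,y) = 0. -/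
/-!
The drift `b` is continuous and `φ` converges to `y`, so `b y = 0` (`field_eq_zero_of_tendsto`).
Given `ε > 0`, follow `φ` at zero cost until it is so close to `y` that `b` is at most `ε` in norm
on the segment from `φ T` to `y`, this segment has length at most `ε`, and it lies in `closure D`.
Traversing it in unit time costs `O(ε²)` (`quasiPot_le_of_segment`); let `ε → 0`.
-/

open MeasureTheory Filter
open scoped RealInnerProductSpace ENNReal Topology

/-- The limit of a trajectory of a continuous vector field is a zero of the field: over unit time
intervals the displacement tends both to `0` and to `b y`. -/
lemma field_eq_zero_of_tendsto {d : ℕ}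
    {b : EuclideanSpace ℝ (Fin d) → EuclideanSpace ℝ (Fin d)} (hbc : Continuous b)
    {φ : ℝ → EuclideanSpace ℝ (Fin d)} {y : EuclideanSpace ℝ (Fin d)}
    (hφ : ∀ t, 0 ≤ t → HasDerivAt φ (b (φ t)) t) (hlim : Tendsto φ atTop (𝓝 y)) :
    b y = 0 := by
  have hdisp : Tendsto (fun t => φ (t + 1) - φ t) atTop (𝓝 0) := by
    simpa using (hlim.comp (tendsto_atTop_add_const_right atTop (1 : ℝ) tendsto_id)).sub hlim
  refine tendsto_nhds_unique ?_ hdisp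
  rw [Metric.tendsto_atTop]
  intro ε hε
  have hb' : Tendsto (fun t => b (φ t)) atTop (𝓝 (b y)) := (hbc.tendsto y).comp hlim
  obtain ⟨N, hN⟩ := Metric.tendsto_atTop.1 hb' (ε / 2) (by positivity)
  refine ⟨max N 0, fun t ht => ?_⟩
  have htN : N ≤ t := (le_max_left _ _).trans ht
  have ht0 : 0 ≤ t := (le_max_right _ _).trans ht
  -- the mean value inequality for `s ↦ φ s - s • b y` on `[t, t + 1]`
  have key := (convex_Icc t (t + 1)).norm_image_sub_le_of_norm_hasDerivWithin_le
    (f := fun s => φ s - s • b y) (f' := fun s => b (φ s) - (1 : ℝ) • b y) (C := ε / 2)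
    (x := t) (y := t + 1)
    (fun s hs => ((hφ s (ht0.trans hs.1)).sub ((hasDerivAt_id s).smul_const _)).hasDerivWithinAt)
    (fun s hs => by
      have := hN s (htN.trans hs.1)
      rw [dist_eq_norm] at this
      simpa using this.le)
    ⟨le_rfl, by linarith⟩ ⟨by linarith, le_rfl⟩
  have e : φ (t + 1) - (t + 1) • b y - (φ t - t • b y) = φ (t + 1) - φ t - b y := by
    module
  simp only [e] at key
  rw [dist_eq_norm]
  simp at key
  linarith

/-- Following `φ` up to time `T` is free, and moving from `φ T` to `y` along the segment in unit
time costs at most `(2 ε)²`, where `ε` bounds both the speed `‖y - φ T‖` and `b` on the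
segment. -/
lemma quasiPot_le_of_segment {d : ℕ}
    {b : EuclideanSpace ℝ (Fin d) → EuclideanSpace ℝ (Fin d)} (hbc : Continuous b)
    {A : Set (EuclideanSpace ℝ (Fin d))} {φ : ℝ → EuclideanSpace ℝ (Fin d)}
    {y : EuclideanSpace ℝ (Fin d)}
    (hφ : ∀ t, 0 ≤ t → HasDerivAt φ (b (φ t)) t) (hφA : ∀ t, 0 ≤ t → φ t ∈ A)
    {T ε : ℝ} (hT : 0 ≤ T) (hseg : segment ℝ (φ T) y ⊆ A) (hspeed : ‖y - φ T‖ ≤ ε)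
    (hbseg : ∀ z ∈ segment ℝ (φ T) y, ‖b z‖ ≤ ε) :
    quasiPot b A (φ 0) y ≤ ENNReal.ofReal ((2 * ε) ^ 2) := by
  have hφc : ContinuousOn φ (Set.Icc 0 T) := fun s hs =>
    (hφ s hs.1).continuousAt.continuousWithinAt
  have hbφc : ContinuousOn (fun s => b (φ s)) (Set.Icc 0 T) := hbc.comp_continuousOn hφc
  set v := y - φ T with hv
  set g : ℝ → EuclideanSpace ℝ (Fin d) := fun s => if s ≤ T then b (φ s) else v with hg
  set ψ : ℝ → EuclideanSpace ℝ (Fin d) := fun s => if s ≤ T then φ s else φ T + (s - T) • v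
    with hψ
  have hψseg : ∀ s, T < s → s ≤ T + 1 → ψ s ∈ segment ℝ (φ T) y := by
    intro s h1 h2
    rw [segment_eq_image']
    exact ⟨s - T, ⟨by linarith, by linarith⟩, by simp [hψ, hv, not_le.2 h1]⟩
  have hgint1 : IntegrableOn g (Set.Icc 0 T) :=
    (hbφc.integrableOn_Icc).congr_fun (fun s hs => by simp [hg, hs.2]) measurableSet_Icc
  have hgint2 : IntegrableOn g (Set.Ioc T (T + 1)) :=
    (integrableOn_const (C := v) (by simp)).congr_fun
      (fun s hs => by simp [hg, not_le.2 hs.1]) measurableSet_Ioc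
  have hgint : IntegrableOn g (Set.Icc 0 (T + 1)) := by
    rw [← Set.Icc_union_Ioc_eq_Icc hT (by linarith : T ≤ T + 1)]
    exact hgint1.union hgint2
  have hI : ∀ t, 0 ≤ t → t ≤ T → ∫ s in (0 : ℝ)..t, g s = φ t - φ 0 := by
    intro t h0 h1
    have hsub : Set.uIcc 0 t ⊆ Set.Icc 0 T := by
      rw [Set.uIcc_of_le h0]; exact Set.Icc_subset_Icc_right h1
    rw [← intervalIntegral.integral_eq_sub_of_hasDerivAt (fun s hs => hφ s (hsub hs).1)
      (hbφc.mono hsub).intervalIntegrable]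
    exact intervalIntegral.integral_congr fun s hs => by simp [hg, (hsub hs).2]
  have hψeq : ∀ t ∈ Set.Icc (0 : ℝ) (T + 1), ψ t = φ 0 + ∫ s in (0 : ℝ)..t, g s := by
    intro t ht
    by_cases h : t ≤ T
    · rw [hI t ht.1 h]; simp [hψ, h]
    · have h' : T < t := not_le.1 h
      have i1 : IntervalIntegrable g volume 0 T :=
        (intervalIntegrable_iff_integrableOn_Icc_of_le hT).2 hgint1
      have i2 : IntervalIntegrable g volume T t :=
        (intervalIntegrable_iff_integrableOn_Ioc_of_le h'.le).2
          (hgint2.mono_set (Set.Ioc_subset_Ioc_right ht.2))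
      have e2 : ∫ s in T..t, g s = (t - T) • v := by
        rw [← intervalIntegral.integral_const]
        refine intervalIntegral.integral_congr_ae (Eventually.of_forall fun s hs => ?_)
        rw [Set.uIoc_of_le h'.le] at hs
        simp [hg, not_le.2 hs.1]
      rw [← intervalIntegral.integral_add_adjacent_intervals i1 i2, hI T hT le_rfl, e2]
      simp only [hψ, h, if_false]
      abel
  have hψA : ∀ t ∈ Set.Icc (0 : ℝ) (T + 1), ψ t ∈ A := by
    intro t ht
    by_cases h : t ≤ T
    · simpa [hψ, h] using hφA t ht.1
    · exact hseg (hψseg t (not_le.1 h) ht.2)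
  have hψy : ψ (T + 1) = y := by simp [hψ, hv]
  have hle : quasiPot b A (φ 0) y ≤ pathEnergy b ψ g (T + 1) :=
    iInf_le_of_le (T + 1) <| iInf_le_of_le (by linarith) <| iInf_le_of_le ψ <|
      iInf_le_of_le g <| iInf_le_of_le hgint <| iInf_le_of_le hψeq <|
      iInf_le_of_le hψA <| iInf_le_of_le hψy le_rfl
  refine hle.trans ?_
  unfold pathEnergy
  refine ENNReal.half_le_self.trans ?_
  calc ∫⁻ s in Set.Icc (0 : ℝ) (T + 1), ENNReal.ofReal (‖g s - b (ψ s)‖ ^ 2)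
      ≤ ∫⁻ s in Set.Icc (0 : ℝ) (T + 1),
          (Set.Ioc T (T + 1)).indicator (fun _ => ENNReal.ofReal ((2 * ε) ^ 2)) s := by
        refine setLIntegral_mono' measurableSet_Icc fun s hs => ?_
        by_cases h : s ≤ T
        · simp [hg, hψ, h]
        · have h' : T < s := not_le.1 h
          rw [Set.indicator_of_mem (show s ∈ Set.Ioc T (T + 1) from ⟨h', hs.2⟩)]
          refine ENNReal.ofReal_le_ofReal (pow_le_pow_left₀ (norm_nonneg _) ?_ 2)
          have e : g s = v := by simp [hg, h]
          rw [e]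
          have := norm_sub_le v (b (ψ s))
          have := hbseg _ (hψseg s h' hs.2)
          linarith
    _ ≤ ∫⁻ s, (Set.Ioc T (T + 1)).indicator (fun _ => ENNReal.ofReal ((2 * ε) ^ 2)) s :=
        setLIntegral_le_lintegral _ _
    _ = ENNReal.ofReal ((2 * ε) ^ 2) := by
        rw [lintegral_indicator measurableSet_Ioc]
        simp

/-- **Lemma 2.1, third item.** If a trajectory of `ẋ = b(x)` starting at `x ∈ cl D` stays
in `cl D` and converges to `y ∈ cl D`, and `cl D` contains the segments joining its points
close to `y` to `y`, then `V_{cl D}(x, y) = 0`. -/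
theorem stmt14 {d : ℕ}
    (f : EuclideanSpace ℝ (Fin d) → ℝ)
    (ℓ b : EuclideanSpace ℝ (Fin d) → EuclideanSpace ℝ (Fin d))
    (hf : ContDiff ℝ 2 f) (hl : ContDiff ℝ 1 ℓ)
    (hortho : ∀ x, ⟪ℓ x, gradient f x⟫ = 0)
    (hb : b = fun x => -(gradient f x + ℓ x))
    (D : Set (EuclideanSpace ℝ (Fin d)))
    (x y : EuclideanSpace ℝ (Fin d)) (hx : x ∈ closure D) (hy : y ∈ closure D)
    (φ : ℝ → EuclideanSpace ℝ (Fin d)) (hφ0 : φ 0 = x)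
    (hφ : ∀ t, 0 ≤ t → HasDerivAt φ (b (φ t)) t)
    (hφD : ∀ t, 0 ≤ t → φ t ∈ closure D)
    (hlim : Tendsto φ atTop (𝓝 y))
    (hseg : ∃ r > 0, ∀ z ∈ closure D, ‖z - y‖ < r → segment ℝ z y ⊆ closure D) :
    quasiPot b (closure D) x y = 0 := by
  obtain ⟨r, hr, hseg⟩ := hseg
  have hbc : Continuous b := by
    have hgrad : Continuous (gradient f) :=
      (InnerProductSpace.toDual ℝ _).symm.continuous.comp (hf.continuous_fderiv (by norm_num))
    rw [hb]
    exact (hgrad.add hl.continuous).neg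
  have hby : b y = 0 := field_eq_zero_of_tendsto hbc hφ hlim
  have hbound : ∀ ε : ℝ, 0 < ε → quasiPot b (closure D) x y ≤ ENNReal.ofReal ((2 * ε) ^ 2) := by
    intro ε hε
    obtain ⟨δ, hδ, hbδ⟩ := Metric.continuousAt_iff.1 hbc.continuousAt ε hε
    obtain ⟨N, hN⟩ := Metric.tendsto_atTop.1 hlim (min (min δ r) ε)
      (lt_min (lt_min hδ hr) hε)
    have hT := hN (max N 0) (le_max_left _ _)
    have hT0 : 0 ≤ max N 0 := le_max_right _ _
    set T := max N 0
    obtain ⟨⟨hTδ, hTr⟩, hTε⟩ := (by simpa only [lt_min_iff] using hT :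
      (dist (φ T) y < δ ∧ dist (φ T) y < r) ∧ dist (φ T) y < ε)
    rw [← hφ0]
    refine quasiPot_le_of_segment hbc hφ hφD hT0
      (hseg _ (hφD T hT0) (by rwa [← dist_eq_norm])) ?_ fun z hz => ?_
    · rw [← dist_eq_norm, dist_comm]; exact hTε.le
    · have hzδ : z ∈ Metric.ball y δ :=
        (convex_ball y δ).segment_subset hTδ (Metric.mem_ball_self hδ) hz
      simpa [hby] using (hbδ hzδ).le
  have hlim0 : Tendsto (fun ε : ℝ => ENNReal.ofReal ((2 * ε) ^ 2)) (𝓝[>] 0) (𝓝 0) := by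
    have hc : Continuous fun ε : ℝ => ENNReal.ofReal ((2 * ε) ^ 2) :=
      ENNReal.continuous_ofReal.comp (by fun_prop)
    simpa using (hc.tendsto 0).mono_left nhdsWithin_le_nhds
  exact le_antisymm (ge_of_tendsto hlim0 (eventually_mem_nhdsWithin.mono hbound)) zero_le
end

section
/- Let K ⊆ E be compact, T > 0, and let G be a nonempty closed subset of the space C([0,T], K) of continuous paths with values in K, endowed with the topology of uniform convergence. Then: (1) if inf_{φ ∈ G} S_{0,T}(φ) < +∞, this infimum is attained by some φ ∈ G; (2) if no element of G satisfies φ'(t) = b(φ(t)) for all t ∈ [0,T] (i.e. G contains no trajectory of the dynamical system ẋ = b(x) on [0,T]), then inf_{φ ∈ G} S_{0,T}(φ) > 0. -/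
/-! Write `φ' = b(φ) + h`, so that the action of `φ` is `‖h‖² / 2` with `h ∈ L²([0,T]; E)`. The set of
paths in `G` driven by some `h` with `‖h‖ ≤ r` is compact (`isCompact_noisePaths`): such paths stay
in `K` and share a modulus of continuity `M δ + r √δ`, hence lie in a compact set by Arzelà–Ascoli;
the controls lie in a weakly compact ball by Banach–Alaoglu; and the relation
`φ(t) - φ(0) - ∫₀ᵗ b(φ) = ∫₀ᵗ h` for all `t ∈ [0,T]` is closed for uniform convergence of `φ` and
weak convergence of `h`, since `b` is continuous and `h ↦ ⟪e, ∫₀ᵗ h⟫` is the pairing with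
`1_(0,t] e ∈ L²`.

If the infimum of the action is `ρ² / 2`, these sets are nonempty for every `r > ρ`, so they have a
common element `φ` (`exists_forall_mem_noisePaths`). Its action is at most `r² / 2` for all `r > ρ`,
so `φ` is a minimiser. If `ρ = 0`, then `φ(t) - φ(0) - ∫₀ᵗ b(φ)` is bounded by `√t r` for all
`r > 0`, hence vanishes, and `φ` is a trajectory of `ẋ = b(x)` by the fundamental theorem of
calculus. -/

open MeasureTheory
open scoped RealInnerProductSpace ENNReal

/-- The Freidlin–Wentzell action `S_{0,T}(φ) ∈ [0,+∞]` of a continuous path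
`φ : [0,T] → E`: it equals `½ ∫_{[0,T]} ‖g(s) - b(φ(s))‖² ds` when `φ` is absolutely
continuous with integrable derivative `g`, and `+∞` when `φ` is not absolutely
continuous. -/
noncomputable def pathAction {d : ℕ}
    (b : EuclideanSpace ℝ (Fin d) → EuclideanSpace ℝ (Fin d))
    {T : ℝ} (hT : (0 : ℝ) ≤ T)
    (φ : C(Set.Icc (0 : ℝ) T, EuclideanSpace ℝ (Fin d))) : ℝ≥0∞ :=
  ⨅ (g : ℝ → EuclideanSpace ℝ (Fin d))
    (_ : IntegrableOn g (Set.Icc (0 : ℝ) T))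
    (_ : ∀ t ∈ Set.Icc (0 : ℝ) T,
      Set.IccExtend hT (⇑φ) t = Set.IccExtend hT (⇑φ) 0 + ∫ s in (0 : ℝ)..t, g s),
    pathEnergy b (Set.IccExtend hT (⇑φ)) g T

section Paths

variable {d : ℕ} {T : ℝ}

/-! ### Controls and driven paths -/

/-- The Hilbert space `L²([0,T]; E)`, where the controls `φ' - b(φ)` of paths of finite action
live. -/
abbrev Noise (d : ℕ) (T : ℝ) : Type :=
  Lp (EuclideanSpace ℝ (Fin d)) 2 (volume.restrict (Set.Icc (0 : ℝ) T))

/-- The residual `φ(t) - φ(0) - ∫₀ᵗ b(φ(s)) ds`; it vanishes on `[0,T]` exactly when `φ` is a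
trajectory of `ẋ = b(x)`. The path is extended to `ℝ` by its endpoint values. -/
noncomputable def pathResidual (b : EuclideanSpace ℝ (Fin d) → EuclideanSpace ℝ (Fin d))
    (hT : (0 : ℝ) ≤ T) (φ : C(Set.Icc (0 : ℝ) T, EuclideanSpace ℝ (Fin d))) (t : ℝ) :
    EuclideanSpace ℝ (Fin d) :=
  Set.IccExtend hT φ t - Set.IccExtend hT φ 0 - ∫ s in (0 : ℝ)..t, b (Set.IccExtend hT φ s)

/-- The path `φ` solves `φ' = b(φ) + h` on `[0,T]` in integrated form, with `h ∈ L²`. -/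
def DrivenBy (b : EuclideanSpace ℝ (Fin d) → EuclideanSpace ℝ (Fin d))
    (hT : (0 : ℝ) ≤ T) (φ : C(Set.Icc (0 : ℝ) T, EuclideanSpace ℝ (Fin d)))
    (h : Noise d T) : Prop :=
  ∀ t ∈ Set.Icc (0 : ℝ) T,
    pathResidual b hT φ t = ∫ s in Set.Ioc 0 t, h s ∂(volume.restrict (Set.Icc (0 : ℝ) T))

theorem continuous_drift {b : EuclideanSpace ℝ (Fin d) → EuclideanSpace ℝ (Fin d)}
    (hb : Continuous b) (hT : (0 : ℝ) ≤ T)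
    (φ : C(Set.Icc (0 : ℝ) T, EuclideanSpace ℝ (Fin d))) :
    Continuous fun s => b (Set.IccExtend hT φ s) :=
  hb.comp (φ.continuous.Icc_extend')

theorem continuous_residual {b : EuclideanSpace ℝ (Fin d) → EuclideanSpace ℝ (Fin d)}
    (hb : Continuous b) (hT : (0 : ℝ) ≤ T) (t : ℝ) :
    Continuous fun φ : C(Set.Icc (0 : ℝ) T, EuclideanSpace ℝ (Fin d)) => pathResidual b hT φ t := by
  have hint : Continuous fun φ : C(Set.Icc (0 : ℝ) T, EuclideanSpace ℝ (Fin d)) =>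
      ∫ s in (0 : ℝ)..t, b (Set.IccExtend hT φ s) := by
    apply intervalIntegral.continuous_parametric_intervalIntegral_of_continuous'
    refine hb.comp ?_
    change Continuous fun p : C(Set.Icc (0 : ℝ) T, EuclideanSpace ℝ (Fin d)) × ℝ =>
      p.1 (Set.projIcc 0 T hT p.2)
    exact continuous_eval.comp
      (continuous_fst.prodMk ((continuous_projIcc (h := hT)).comp continuous_snd))
  exact ((continuous_eval_const (Set.projIcc 0 T hT t)).sub
    (continuous_eval_const (Set.projIcc 0 T hT 0))).sub hint

/-- Cauchy–Schwarz: `‖∫_S h‖ ≤ |S ∩ [0,T]|^{1/2} ‖h‖_{L²}`. -/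
theorem norm_setIntegral_noise_le (h : Noise d T) {S : Set ℝ} (hS : MeasurableSet S) :
    ‖∫ s in S, h s ∂(volume.restrict (Set.Icc (0 : ℝ) T))‖ ≤
      ((volume.restrict (Set.Icc (0 : ℝ) T)).real S) ^ (1 / 2 : ℝ) * ‖h‖ := by
  set v := ∫ s in S, h s ∂(volume.restrict (Set.Icc (0 : ℝ) T)) with hv
  -- Pair `h` in `L²` with the test function `1_S v`, where `v = ∫_S h`.
  rcases eq_or_ne v 0 with h0 | h0
  · rw [h0, norm_zero]; positivity
  have hμ : (volume.restrict (Set.Icc (0 : ℝ) T)) S ≠ ∞ := measure_ne_top _ _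
  have h1 := L2.inner_indicatorConstLp_eq_inner_setIntegral ℝ hS hμ v h
  rw [← hv, real_inner_self_eq_norm_sq] at h1
  have h2 := real_inner_le_norm (indicatorConstLp 2 hS hμ v) h
  rw [h1, norm_indicatorConstLp (by norm_num) (by norm_num)] at h2
  have h3 : 0 < ‖v‖ := norm_pos_iff.2 h0
  refine le_of_mul_le_mul_left ?_ h3
  calc ‖v‖ * ‖v‖ = ‖v‖ ^ 2 := by ring
    _ ≤ _ := h2
    _ = _ := by simp; ring

theorem lintegral_noise_sq (h : Noise d T) :
    ∫⁻ s in Set.Icc (0 : ℝ) T, ENNReal.ofReal (‖h s‖ ^ 2) = ENNReal.ofReal (‖h‖ ^ 2) := by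
  rw [← ofReal_integral_eq_lintegral_ofReal]
  · rw [← real_inner_self_eq_norm_sq h, L2.inner_def]
    simp only [real_inner_self_eq_norm_sq]
  · exact (memLp_two_iff_integrable_sq_norm (Lp.memLp h).1).1 (Lp.memLp h)
  · exact Filter.Eventually.of_forall fun s => by positivity

theorem integrable_noise (h : Noise d T) :
    IntegrableOn h (Set.Icc (0 : ℝ) T) :=
  (Lp.memLp h).integrable (by norm_num)

theorem setIntegral_Ioc_eq {t : ℝ} (ht : t ∈ Set.Icc (0 : ℝ) T)
    (h : ℝ → EuclideanSpace ℝ (Fin d)) :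
    ∫ s in Set.Ioc 0 t, h s ∂(volume.restrict (Set.Icc (0 : ℝ) T)) = ∫ s in (0 : ℝ)..t, h s := by
  rw [Measure.restrict_restrict measurableSet_Ioc, intervalIntegral.integral_of_le ht.1,
    Set.inter_eq_left.2 (Set.Ioc_subset_Icc_self.trans (Set.Icc_subset_Icc_right ht.2))]

theorem intervalIntegrable_of_Icc_s15 {g : ℝ → EuclideanSpace ℝ (Fin d)}
    (hg : IntegrableOn g (Set.Icc (0 : ℝ) T)) {s t : ℝ} (hs : s ∈ Set.Icc (0 : ℝ) T)
    (ht : t ∈ Set.Icc (0 : ℝ) T) : IntervalIntegrable g volume s t :=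
  (hg.mono_set (Set.uIcc_subset_Icc hs ht)).intervalIntegrable

/-! ### Action and norm of the control -/

theorem pathAction_le_of_drivenBy {b : EuclideanSpace ℝ (Fin d) → EuclideanSpace ℝ (Fin d)}
    (hb : Continuous b) (hT : (0 : ℝ) ≤ T)
    {φ : C(Set.Icc (0 : ℝ) T, EuclideanSpace ℝ (Fin d))} {h : Noise d T}
    (hφ : DrivenBy b hT φ h) {r : ℝ} (hr : ‖h‖ ≤ r) :
    pathAction b hT φ ≤ ENNReal.ofReal (r ^ 2) / 2 := by
  have hc := continuous_drift hb hT φ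
  have hbi : IntegrableOn (fun s => b (Set.IccExtend hT φ s)) (Set.Icc (0 : ℝ) T) :=
    hc.continuousOn.integrableOn_Icc
  refine iInf_le_of_le (fun s => h s + b (Set.IccExtend hT φ s)) <|
    iInf_le_of_le ((integrable_noise h).add hbi) <| iInf_le_of_le ?_ ?_
  · intro t ht
    have h0 : (0 : ℝ) ∈ Set.Icc (0 : ℝ) T := ⟨le_rfl, hT⟩
    have h1 := hφ t ht
    rw [setIntegral_Ioc_eq ht, pathResidual] at h1
    rw [intervalIntegral.integral_add (intervalIntegrable_of_Icc_s15 (integrable_noise h) h0 ht)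
      (hc.intervalIntegrable _ _), ← h1]
    abel
  · unfold pathEnergy
    gcongr
    simp only [add_sub_cancel_right]
    rw [lintegral_noise_sq]
    gcongr

theorem exists_drivenBy_of_pathAction_lt
    {b : EuclideanSpace ℝ (Fin d) → EuclideanSpace ℝ (Fin d)}
    (hb : Continuous b) (hT : (0 : ℝ) ≤ T)
    {φ : C(Set.Icc (0 : ℝ) T, EuclideanSpace ℝ (Fin d))} {r : ℝ} (hr : 0 ≤ r)
    (hφ : pathAction b hT φ < ENNReal.ofReal (r ^ 2) / 2) :
    ∃ h : Noise d T, ‖h‖ ≤ r ∧ DrivenBy b hT φ h := by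
  have hc := continuous_drift hb hT φ
  have hbi : IntegrableOn (fun s => b (Set.IccExtend hT φ s)) (Set.Icc (0 : ℝ) T) :=
    hc.continuousOn.integrableOn_Icc
  simp only [pathAction, iInf_lt_iff] at hφ
  obtain ⟨g, hg, hφg, hlt⟩ := hφ
  have hlt' : ∫⁻ s in Set.Icc (0 : ℝ) T, ENNReal.ofReal (‖g s - b (Set.IccExtend hT φ s)‖ ^ 2)
      < ENNReal.ofReal (r ^ 2) := by
    by_contra hcon
    exact absurd hlt (not_lt.2 (ENNReal.div_le_div_right (not_lt.1 hcon) 2))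
  have hi : IntegrableOn (fun s => g s - b (Set.IccExtend hT φ s)) (Set.Icc (0 : ℝ) T) :=
    hg.sub hbi
  have hmem : MemLp (fun s => g s - b (Set.IccExtend hT φ s)) 2
      (volume.restrict (Set.Icc (0 : ℝ) T)) := by
    rw [memLp_two_iff_integrable_sq_norm hi.aestronglyMeasurable]
    refine (lintegral_ofReal_ne_top_iff_integrable (hi.aestronglyMeasurable.norm.pow 2)
      (Filter.Eventually.of_forall fun s => sq_nonneg _)).1 (hlt'.trans_le le_top).ne
  have hcoe := hmem.coeFn_toLp
  refine ⟨hmem.toLp _, ?_, fun t ht => ?_⟩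
  · have h1 := lintegral_noise_sq (hmem.toLp _)
    rw [lintegral_congr_ae (hcoe.mono fun s hs => by rw [hs])] at h1
    rw [h1, ENNReal.ofReal_lt_ofReal_iff_of_nonneg (by positivity)] at hlt'
    exact (pow_le_pow_iff_left₀ (norm_nonneg _) hr two_ne_zero).1 hlt'.le
  · rw [integral_congr_ae (ae_restrict_of_ae hcoe), setIntegral_Ioc_eq ht,
      intervalIntegral.integral_sub (intervalIntegrable_of_Icc_s15 hg ⟨le_rfl, hT⟩ ht)
      (hc.intervalIntegrable _ _), pathResidual, hφg t ht, add_sub_cancel_left]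

/-! ### Compactness of the paths with bounded control -/

/-- The paths of `G` driven by some control of `L²` norm at most `r`. -/
def noisePaths (b : EuclideanSpace ℝ (Fin d) → EuclideanSpace ℝ (Fin d))
    (hT : (0 : ℝ) ≤ T) (G : Set C(Set.Icc (0 : ℝ) T, EuclideanSpace ℝ (Fin d))) (r : ℝ) :
    Set C(Set.Icc (0 : ℝ) T, EuclideanSpace ℝ (Fin d)) :=
  {φ ∈ G | ∃ h : Noise d T, ‖h‖ ≤ r ∧ DrivenBy b hT φ h}

/-- Paths in `K` driven by controls of norm at most `r` share the modulus of continuity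
`δ ↦ M δ + r √δ`, where `M` bounds `b` on the path. -/
theorem dist_le_of_drivenBy {b : EuclideanSpace ℝ (Fin d) → EuclideanSpace ℝ (Fin d)}
    (hb : Continuous b) (hT : (0 : ℝ) ≤ T)
    {φ : C(Set.Icc (0 : ℝ) T, EuclideanSpace ℝ (Fin d))} {h : Noise d T}
    (hφ : DrivenBy b hT φ h) {r M : ℝ} (hr : ‖h‖ ≤ r) (hM : ∀ t, ‖b (φ t)‖ ≤ M)
    (x y : Set.Icc (0 : ℝ) T) :
    dist (φ x) (φ y) ≤ M * dist x y + dist x y ^ (1 / 2 : ℝ) * r := by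
  wlog hxy : y ≤ x generalizing x y
  · rw [dist_comm, dist_comm x]
    exact this y x (le_of_not_ge hxy)
  have hxy' : (y : ℝ) ≤ x := hxy
  have hd : dist x y = (x : ℝ) - y := by
    rw [Subtype.dist_eq, Real.dist_eq, abs_of_nonneg (sub_nonneg.2 hxy')]
  have hc := continuous_drift hb hT φ
  have h0 : (0 : ℝ) ∈ Set.Icc (0 : ℝ) T := ⟨le_rfl, hT⟩
  have hx := hφ x x.2
  have hy := hφ y y.2
  rw [setIntegral_Ioc_eq x.2, pathResidual, Set.IccExtend_val] at hx
  rw [setIntegral_Ioc_eq y.2, pathResidual, Set.IccExtend_val] at hy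
  have hdiff : φ x - φ y =
      (∫ s in (y : ℝ)..x, b (Set.IccExtend hT φ s)) + ∫ s in (y : ℝ)..x, h s := by
    rw [← intervalIntegral.integral_interval_sub_left (hc.intervalIntegrable 0 _)
      (hc.intervalIntegrable 0 _), ← intervalIntegral.integral_interval_sub_left
      (intervalIntegrable_of_Icc_s15 (integrable_noise h) h0 x.2)
      (intervalIntegrable_of_Icc_s15 (integrable_noise h) h0 y.2), ← hx, ← hy]
    abel
  have hsub : Set.Ioc (y : ℝ) x ⊆ Set.Icc 0 T :=
    Set.Ioc_subset_Icc_self.trans (Set.Icc_subset_Icc y.2.1 x.2.2)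
  have hn := norm_setIntegral_noise_le h (measurableSet_Ioc (a := (y : ℝ)) (b := x))
  rw [Measure.restrict_restrict measurableSet_Ioc, Set.inter_eq_left.2 hsub,
    ← intervalIntegral.integral_of_le hxy', measureReal_restrict_apply measurableSet_Ioc,
    Set.inter_eq_left.2 hsub, Real.volume_real_Ioc_of_le hxy'] at hn
  rw [dist_eq_norm, hdiff, hd]
  refine (norm_add_le _ _).trans (add_le_add ?_ (hn.trans ?_))
  · refine (intervalIntegral.norm_integral_le_of_norm_le_const fun s _ => hM _).trans_eq ?_
    rw [abs_of_nonneg (sub_nonneg.2 hxy')]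
  · have := sub_nonneg.2 hxy'
    gcongr

/-- Arzelà–Ascoli for `K`-valued paths sharing a modulus of continuity. -/
theorem isCompact_of_modulus {K : Set (EuclideanSpace ℝ (Fin d))} (hK : IsCompact K)
    {ω : ℝ → ℝ} (hω : Filter.Tendsto ω (nhds 0) (nhds 0)) :
    IsCompact {φ : C(Set.Icc (0 : ℝ) T, EuclideanSpace ℝ (Fin d)) |
      (∀ t, φ t ∈ K) ∧ ∀ x y, dist (φ x) (φ y) ≤ ω (dist x y)} := by
  set A := {φ : C(Set.Icc (0 : ℝ) T, EuclideanSpace ℝ (Fin d)) |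
      (∀ t, φ t ∈ K) ∧ ∀ x y, dist (φ x) (φ y) ≤ ω (dist x y)} with hA
  have hclosed : IsClosed A := by
    simp only [hA, Set.ofPred_and, Set.ofPred_forall]
    refine (isClosed_iInter fun t => hK.isClosed.preimage (continuous_eval_const t)).inter
      (isClosed_iInter fun x => isClosed_iInter fun y => isClosed_le
        ((continuous_eval_const x).dist (continuous_eval_const y)) continuous_const)
  let e := ContinuousMap.isometryEquivBoundedOfCompact (Set.Icc (0 : ℝ) T)
    (EuclideanSpace ℝ (Fin d))
  have hcomp : IsCompact (e.toHomeomorph '' A) := by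
    refine BoundedContinuousFunction.arzela_ascoli₂ K hK _
      (e.toHomeomorph.isClosed_image.2 hclosed) ?_ ?_
    · rintro _ x ⟨φ, hφ, rfl⟩
      exact hφ.1 x
    · refine Metric.equicontinuous_of_continuity_modulus ω hω _ ?_
      rintro x y ⟨_, φ, hφ, rfl⟩
      exact hφ.2 x y
  exact e.toHomeomorph.isCompact_image.1 hcomp

/-- Compactness of `noisePaths`: it is the projection of a closed relation between paths and
controls, inside the product of an Arzelà–Ascoli compact set with a weak-* compact ball. -/
theorem isCompact_noisePaths {b : EuclideanSpace ℝ (Fin d) → EuclideanSpace ℝ (Fin d)}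
    (hb : Continuous b) {K : Set (EuclideanSpace ℝ (Fin d))} (hK : IsCompact K)
    (hT : (0 : ℝ) ≤ T) {G : Set C(Set.Icc (0 : ℝ) T, EuclideanSpace ℝ (Fin d))}
    (hG : IsClosed G) (hGK : ∀ φ ∈ G, ∀ t, φ t ∈ K) (r : ℝ) :
    IsCompact (noisePaths b hT G r) := by
  obtain ⟨M, hM⟩ := hK.exists_bound_of_continuousOn hb.continuousOn
  have hω : Filter.Tendsto (fun δ : ℝ => M * δ + δ ^ (1 / 2 : ℝ) * r) (nhds 0) (nhds 0) := by
    have : Continuous (fun δ : ℝ => M * δ + δ ^ (1 / 2 : ℝ) * r) :=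
      (continuous_const.mul continuous_id).add
        ((Real.continuous_rpow_const (by norm_num)).mul continuous_const)
    simpa using this.tendsto 0
  let A : Set C(Set.Icc (0 : ℝ) T, EuclideanSpace ℝ (Fin d)) :=
    {φ | (∀ t, φ t ∈ K) ∧ ∀ x y, dist (φ x) (φ y) ≤ M * dist x y + dist x y ^ (1 / 2 : ℝ) * r}
  have hcA : IsCompact A := isCompact_of_modulus hK hω
  let B : Set (WeakDual ℝ (Noise d T)) :=
    WeakDual.toStrongDual ⁻¹' Metric.closedBall (0 : StrongDual ℝ (Noise d T)) r
  have hcB : IsCompact B := WeakDual.isCompact_closedBall _ r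
  let test (t : ℝ) (e : EuclideanSpace ℝ (Fin d)) : Noise d T :=
    indicatorConstLp 2 (measurableSet_Ioc (a := 0) (b := t)) (measure_ne_top _ _) e
  let Z : Set (C(Set.Icc (0 : ℝ) T, EuclideanSpace ℝ (Fin d)) × WeakDual ℝ (Noise d T)) :=
    {p | p.1 ∈ G ∧ ∀ t ∈ Set.Icc (0 : ℝ) T, ∀ e, ⟪e, pathResidual b hT p.1 t⟫ = p.2 (test t e)}
  have hZ : IsClosed Z := by
    simp only [Z, Set.ofPred_and, Set.ofPred_forall]
    refine (hG.preimage continuous_fst).inter (isClosed_iInter fun t => isClosed_iInter fun _ =>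
      isClosed_iInter fun e => isClosed_eq ?_ ?_)
    · exact continuous_const.inner ((continuous_residual hb hT t).comp continuous_fst)
    · exact (WeakDual.eval_continuous (test t e)).comp continuous_snd
  -- By the Riesz isomorphism, the weak-* closed relation `Z` encodes `DrivenBy`.
  have hiff : ∀ φ (h : Noise d T), DrivenBy b hT φ h ↔ ∀ t ∈ Set.Icc (0 : ℝ) T,
      ∀ e, ⟪e, pathResidual b hT φ t⟫ = InnerProductSpace.toDual ℝ _ h (test t e) := by
    intro φ h
    refine forall₂_congr fun t _ => ?_
    have h1 : ∀ e, InnerProductSpace.toDual ℝ _ h (test t e) =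
        ⟪e, ∫ s in Set.Ioc 0 t, h s ∂(volume.restrict (Set.Icc (0 : ℝ) T))⟫ := fun e => by
      rw [InnerProductSpace.toDual_apply_apply, real_inner_comm]
      exact L2.inner_indicatorConstLp_eq_inner_setIntegral ℝ _ _ e h
    simp only [h1]
    exact ⟨fun h2 e => by rw [h2], fun h2 => ext_inner_left ℝ h2⟩
  have himg : noisePaths b hT G r = Prod.fst '' ((A ×ˢ B) ∩ Z) := by
    ext φ
    constructor
    · rintro ⟨hφ, h, hr, hd⟩
      refine ⟨(φ, StrongDual.toWeakDual (InnerProductSpace.toDual ℝ _ h)),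
        ⟨⟨⟨hGK φ hφ, ?_⟩, ?_⟩, hφ, (hiff φ h).1 hd⟩, rfl⟩
      · exact dist_le_of_drivenBy hb hT hd hr fun t => hM _ (hGK φ hφ t)
      · rw [Set.mem_preimage, mem_closedBall_zero_iff]
        change ‖InnerProductSpace.toDual ℝ _ h‖ ≤ r
        rwa [LinearIsometryEquiv.norm_map]
    · rintro ⟨⟨φ, w⟩, ⟨⟨_, hw⟩, hφ, hd⟩, rfl⟩
      obtain ⟨h, hh⟩ := (InnerProductSpace.toDual ℝ (Noise d T)).surjective
        (WeakDual.toStrongDual w)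
      refine ⟨hφ, h, ?_, (hiff φ h).2 ?_⟩
      · rw [Set.mem_preimage, mem_closedBall_zero_iff] at hw
        rwa [← (InnerProductSpace.toDual ℝ (Noise d T)).norm_map, hh]
      · rw [hh]; exact hd
  rw [himg]
  exact ((hcA.prod hcB).inter_right hZ).image continuous_fst

/-! ### Minimisers and trajectories -/

/-- Cantor's intersection theorem applied to the compact sets `noisePaths b hT G r`, `r > ρ`.
Controls for distinct `r` need not be compared, so a.e. uniqueness of the derivative of an
absolutely continuous path plays no role. -/
theorem exists_forall_mem_noisePaths
    {b : EuclideanSpace ℝ (Fin d) → EuclideanSpace ℝ (Fin d)}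
    (hb : Continuous b) {K : Set (EuclideanSpace ℝ (Fin d))} (hK : IsCompact K)
    (hT : (0 : ℝ) ≤ T) {G : Set C(Set.Icc (0 : ℝ) T, EuclideanSpace ℝ (Fin d))}
    (hG : IsClosed G) (hGK : ∀ φ ∈ G, ∀ t, φ t ∈ K) {ρ : ℝ} (hρ : 0 ≤ ρ)
    (hI : ⨅ φ ∈ G, pathAction b hT φ = ENNReal.ofReal (ρ ^ 2) / 2) :
    ∃ φ ∈ G, ∀ r > ρ, φ ∈ noisePaths b hT G r := by
  have hcpt (r : ℝ) := isCompact_noisePaths hb hK hT hG hGK r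
  have : Nonempty (Set.Ioi ρ) := ⟨⟨ρ + 1, by simp⟩⟩
  obtain ⟨φ, hφ⟩ := IsCompact.nonempty_iInter_of_directed_nonempty_isCompact_isClosed
    (fun r : Set.Ioi ρ => noisePaths b hT G r)
    (fun r r' => ⟨r ⊓ r', fun φ ⟨h1, h, h2, h3⟩ => ⟨h1, h, h2.trans (by simp), h3⟩,
      fun φ ⟨h1, h, h2, h3⟩ => ⟨h1, h, h2.trans (by simp), h3⟩⟩)
    (fun ⟨r, hr⟩ => by
      have hr0 : 0 ≤ r := hρ.trans (le_of_lt hr)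
      have hlt : ⨅ φ ∈ G, pathAction b hT φ < ENNReal.ofReal (r ^ 2) / 2 := by
        rw [hI]
        refine ENNReal.div_lt_div_right (by norm_num) (by norm_num) ?_
        rw [ENNReal.ofReal_lt_ofReal_iff_of_nonneg (by positivity)]
        exact pow_lt_pow_left₀ hr hρ two_ne_zero
      simp only [iInf_lt_iff] at hlt
      obtain ⟨φ, hφ, hlt⟩ := hlt
      exact ⟨φ, hφ, exists_drivenBy_of_pathAction_lt hb hT hr0 hlt⟩)
    (fun r => hcpt r) (fun r => (hcpt r).isClosed)
  rw [Set.mem_iInter] at hφ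
  exact ⟨φ, (hφ (Classical.arbitrary _)).1, fun r hr => hφ ⟨r, hr⟩⟩

theorem hasDerivWithinAt_of_residual_eq_zero
    {b : EuclideanSpace ℝ (Fin d) → EuclideanSpace ℝ (Fin d)}
    (hb : Continuous b) (hT : (0 : ℝ) ≤ T)
    {φ : C(Set.Icc (0 : ℝ) T, EuclideanSpace ℝ (Fin d))}
    (hφ : ∀ t ∈ Set.Icc (0 : ℝ) T, pathResidual b hT φ t = 0) {t : ℝ}
    (ht : t ∈ Set.Icc (0 : ℝ) T) :
    HasDerivWithinAt (Set.IccExtend hT φ) (b (Set.IccExtend hT φ t)) (Set.Icc (0 : ℝ) T) t := by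
  have hd := ((continuous_drift hb hT φ).integral_hasStrictDerivAt 0 t).hasDerivAt
  have heq : ∀ s ∈ Set.Icc (0 : ℝ) T, Set.IccExtend hT φ s =
      Set.IccExtend hT φ 0 + ∫ u in (0 : ℝ)..s, b (Set.IccExtend hT φ u) := fun s hs => by
    rw [← sub_eq_iff_eq_add', ← sub_eq_zero]
    exact hφ s hs
  exact (hd.const_add _).hasDerivWithinAt.congr heq (heq t ht)

end Paths

/-- **Lemma 2.1, fourth item.** Let `G` be a nonempty closed subset of `C([0,T], K)` (`K`
compact), endowed with the uniform convergence topology.  Then the infimum of the action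
over `G` is attained as soon as it is finite; and if `G` contains no trajectory of the
dynamical system `ẋ = b(x)` on `[0,T]`, this infimum is strictly positive. -/
theorem stmt15 {d : ℕ}
    (f : EuclideanSpace ℝ (Fin d) → ℝ)
    (ℓ b : EuclideanSpace ℝ (Fin d) → EuclideanSpace ℝ (Fin d))
    (hf : ContDiff ℝ 1 f) (hl : Continuous ℓ)
    (hortho : ∀ x, ⟪ℓ x, gradient f x⟫ = 0)
    (hb : b = fun x => -(gradient f x + ℓ x))
    (K : Set (EuclideanSpace ℝ (Fin d))) (hK : IsCompact K)
    (T : ℝ) (hT : 0 < T)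
    (G : Set C(Set.Icc (0 : ℝ) T, EuclideanSpace ℝ (Fin d)))
    (hGne : G.Nonempty) (hGclosed : IsClosed G)
    (hGK : ∀ φ ∈ G, ∀ t, φ t ∈ K) :
    ((⨅ φ ∈ G, pathAction b hT.le φ) < ⊤ →
      ∃ φ ∈ G, pathAction b hT.le φ = ⨅ ψ ∈ G, pathAction b hT.le ψ) ∧
    ((∀ φ ∈ G, ¬ ∀ t ∈ Set.Icc (0 : ℝ) T,
        HasDerivWithinAt (Set.IccExtend hT.le (⇑φ)) (b (Set.IccExtend hT.le (⇑φ) t))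
          (Set.Icc (0 : ℝ) T) t) →
      0 < ⨅ φ ∈ G, pathAction b hT.le φ) := by
  have hbc : Continuous b := by
    rw [hb]
    exact (((InnerProductSpace.toDual ℝ _).symm.continuous.comp
      (hf.continuous_fderiv one_ne_zero)).add hl).neg
  refine ⟨fun hfin => ?_, fun hno => ?_⟩
  -- Parametrise the infimum as `ρ² / 2`, so that `ρ` is the critical `L²` norm of a control.
  · obtain ⟨ρ, hρ, hI⟩ : ∃ ρ : ℝ, 0 ≤ ρ ∧
        ⨅ φ ∈ G, pathAction b hT.le φ = ENNReal.ofReal (ρ ^ 2) / 2 := by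
      refine ⟨√(2 * (⨅ φ ∈ G, pathAction b hT.le φ).toReal), Real.sqrt_nonneg _, ?_⟩
      rw [Real.sq_sqrt (by positivity), ENNReal.ofReal_mul (by norm_num),
        ENNReal.ofReal_toReal hfin.ne, ENNReal.ofReal_ofNat, mul_comm,
        ENNReal.mul_div_cancel_right (by norm_num) (by norm_num)]
    obtain ⟨φ, hφ, hall⟩ := exists_forall_mem_noisePaths hbc hK hT.le hGclosed hGK hρ hI
    refine ⟨φ, hφ, le_antisymm ?_ (iInf₂_le φ hφ)⟩
    rw [hI]
    have hlim : Filter.Tendsto (fun r : ℝ => ENNReal.ofReal (r ^ 2) / 2) (nhdsWithin ρ (Set.Ioi ρ))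
        (nhds (ENNReal.ofReal (ρ ^ 2) / 2)) :=
      (((ENNReal.continuous_div_const 2 (by norm_num)).comp
        (ENNReal.continuous_ofReal.comp (continuous_pow 2))).tendsto ρ).mono_left
        nhdsWithin_le_nhds
    refine ge_of_tendsto hlim (eventually_nhdsWithin_of_forall fun r hr => ?_)
    obtain ⟨-, h, hr', hd⟩ := hall r hr
    exact pathAction_le_of_drivenBy hbc hT.le hd hr'
  · rw [pos_iff_ne_zero]
    intro h0
    obtain ⟨φ, hφ, hall⟩ := exists_forall_mem_noisePaths (ρ := 0) hbc hK hT.le hGclosed hGK le_rfl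
      (by simpa using h0)
    refine hno φ hφ fun t ht => hasDerivWithinAt_of_residual_eq_zero hbc hT.le (fun s hs => ?_) ht
    -- Cauchy–Schwarz bounds the residual at `s` by `C r` for every `r > 0`.
    set C := ((volume.restrict (Set.Icc (0 : ℝ) T)).real (Set.Ioc 0 s)) ^ (1 / 2 : ℝ)
    have hlim : Filter.Tendsto (fun r : ℝ => C * r) (nhdsWithin 0 (Set.Ioi 0)) (nhds 0) := by
      simpa using ((continuous_const_mul C).tendsto 0).mono_left nhdsWithin_le_nhds
    refine norm_le_zero_iff.1
      (ge_of_tendsto hlim (eventually_nhdsWithin_of_forall fun r hr => ?_))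
    obtain ⟨-, h, hr', hd⟩ := hall r hr
    rw [hd s hs]
    exact (norm_setIntegral_noise_le h measurableSet_Ioc).trans (by gcongr)
end

section
/- Assume in addition that f is twice continuously differentiable, ℓ is continuously differentiable, and D ⊆ E is bounded. Let z be a point of the closure cl(D) with ∇f(z) ≠ 0, let T > 0, and let φ : [0,T] → cl(D) satisfy φ(0) = z and φ'(t) = b(φ(t)) for all t ∈ [0,T]. Then for every y ∈ cl(D) with y ∉ φ([0,T]) and f(y) > f(φ(T)), the quasi-potential satisfies V_{cl(D)}(z,y) > 0. -/
/-!
Why the quasi-potential is positive: a path `ψ` of small action started at `z` follows the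
trajectory `φ` for as long as `φ` is given, and afterwards it cannot climb.

* `norm_sub_le_of_action` (Grönwall): `‖ψ t - φ t‖ ≤ exp (L t) ∫₀ᵗ ‖ψ' - b(ψ)‖`, where `L` is a
  Lipschitz constant of `b` on the compact set `closure D`.  So a path that reaches `y` within
  time `T` has action bounded below, because `y` has positive distance from the curve `φ`.
* `increment_le_action`: by orthogonality, `⟪∇f, b⟫ = -‖∇f‖²`, hence along `ψ`, with
  `h = ψ' - b(ψ)`, `(f ∘ ψ)' = -‖∇f‖² + ⟪∇f, h⟫ ≤ ‖h‖² / 4`.  A path that needs longer than `T` is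
  close to `φ T` at time `T`, so `f` is still well below `f y` there, and the remaining climb to
  `f y` has to be paid for by action.

Both alternatives give a lower bound on `∫ ‖h‖²` that does not depend on the path.
-/


open MeasureTheory
open scoped RealInnerProductSpace ENNReal

open Set Filter Topology intervalIntegral

/-- Increments of `f` along the path are dominated by those of `t ↦ K * ∫₀ᵗ ‖g‖`, where `K` is a
Lipschitz constant of `f` on the compact image of the path. -/
lemma absolutelyContinuous_comp_integral {d : ℕ} {f : EuclideanSpace ℝ (Fin d) → ℝ}
    (hf : LocallyLipschitz f)
    {g : ℝ → EuclideanSpace ℝ (Fin d)} {x : EuclideanSpace ℝ (Fin d)} {r S : ℝ}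
    (hr : 0 ≤ r) (hrS : r ≤ S)
    (hg : IntervalIntegrable g volume 0 S) :
    AbsolutelyContinuousOnInterval (fun t => f (x + ∫ s in (0 : ℝ)..t, g s)) r S := by
  have hS : 0 ≤ S := hr.trans hrS
  have hcont : ContinuousOn (fun t => x + ∫ s in (0 : ℝ)..t, g s) (Icc 0 S) := by
    have := continuousOn_primitive_interval' hg (left_mem_uIcc)
    rw [uIcc_of_le hS] at this
    exact continuousOn_const.add this
  obtain ⟨K, hK⟩ := LocallyLipschitzOn.exists_lipschitzOnWith_of_compact
    (isCompact_Icc.image_of_continuousOn hcont) (hf.locallyLipschitzOn)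
  have hN := hg.norm.absolutelyContinuousOnInterval_intervalIntegral (c := 0) left_mem_uIcc
  have hN' : AbsolutelyContinuousOnInterval (fun t => ∫ s in (0 : ℝ)..t, ‖g s‖) r S :=
    hN.mono (by rw [uIcc_of_le hrS, uIcc_of_le hS]; exact Icc_subset_Icc_left hr)
  have hN'' := hN'.const_mul (K : ℝ)
  rw [absolutelyContinuousOnInterval_iff] at hN'' ⊢
  intro ε hε
  obtain ⟨δ, hδ, H⟩ := hN'' ε hε
  refine ⟨δ, hδ, fun E hE hEδ => (Finset.sum_le_sum ?_).trans_lt (H E hE hEδ)⟩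
  intro i hi
  obtain ⟨h1, h2⟩ := hE.1 i hi
  rw [uIcc_of_le hrS] at h1 h2
  have h1' : (E.2 i).1 ∈ Icc 0 S := ⟨hr.trans h1.1, h1.2⟩
  have h2' : (E.2 i).2 ∈ Icc 0 S := ⟨hr.trans h2.1, h2.2⟩
  have hi' : ∀ t ∈ Icc 0 S, IntervalIntegrable g volume 0 t := fun t ht =>
    hg.mono_set (by rw [uIcc_of_le ht.1, uIcc_of_le hS]; exact Icc_subset_Icc_right ht.2)
  refine (hK.dist_le_mul _ (mem_image_of_mem _ h1') _ (mem_image_of_mem _ h2')).trans ?_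
  simp only [Real.dist_eq, ← mul_sub, abs_mul, NNReal.abs_eq]
  gcongr
  rw [dist_add_left, dist_eq_norm, integral_interval_sub_left (hi' _ h1') (hi' _ h2'),
    integral_interval_sub_left (hi' _ h1').norm (hi' _ h2').norm]
  exact norm_integral_le_abs_integral_norm

/-- The height gained along a path is at most half of the action spent: with `h = ψ' - b(ψ)`,
orthogonality turns `(f ∘ ψ)'` into `-‖∇f‖² + ⟪∇f, h⟫`, which is at most `‖h‖² / 4`. -/
lemma increment_le_action {d : ℕ} {f : EuclideanSpace ℝ (Fin d) → ℝ}
    {ℓ b : EuclideanSpace ℝ (Fin d) → EuclideanSpace ℝ (Fin d)}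
    (hf : ContDiff ℝ 1 f) (hortho : ∀ x, ⟪ℓ x, gradient f x⟫ = 0)
    (hb : b = fun x => -(gradient f x + ℓ x))
    {g ψ : ℝ → EuclideanSpace ℝ (Fin d)} {x : EuclideanSpace ℝ (Fin d)} {r S : ℝ}
    (hr : 0 ≤ r) (hrS : r ≤ S)
    (hg : IntervalIntegrable g volume 0 S)
    (hψ : ψ = fun t => x + ∫ s in (0 : ℝ)..t, g s)
    (hh : IntervalIntegrable (fun s => ‖g s - b (ψ s)‖ ^ 2) volume r S) :
    f (ψ S) - f (ψ r) ≤ (∫ s in r..S, ‖g s - b (ψ s)‖ ^ 2) / 4 := by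
  have hac : AbsolutelyContinuousOnInterval (fun t => f (ψ t)) r S := by
    subst hψ; exact absolutelyContinuous_comp_integral hf.locallyLipschitz hr hrS hg
  rw [← hac.integral_deriv_eq_sub, ← intervalIntegral.integral_div]
  refine integral_mono_ae_restrict hrS hac.intervalIntegrable_deriv (hh.div_const 4) ?_
  rw [EventuallyLE, ae_restrict_iff' measurableSet_Icc]
  filter_upwards [hg.ae_hasDerivAt_integral] with t ht htm
  have hd : HasDerivAt ψ (g t) t := by
    rw [hψ]
    exact (ht (by rw [uIcc_of_le (hr.trans hrS)]; exact ⟨hr.trans htm.1, htm.2⟩) 0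
      left_mem_uIcc).const_add x
  have hfd : HasFDerivAt f (fderiv ℝ f (ψ t)) (ψ t) :=
    (hf.differentiable one_ne_zero (ψ t)).hasFDerivAt
  have hgr : fderiv ℝ f (ψ t) (g t) = ⟪gradient f (ψ t), g t⟫ := by
    simp [gradient]
  have := (hfd.comp_hasDerivAt t hd).deriv
  simp only [Function.comp_def] at this
  rw [this, hgr]
  set h := g t - b (ψ t) with hdef
  have hgt : g t = h - (gradient f (ψ t) + ℓ (ψ t)) := by rw [hdef, hb]; simp only; abel
  have ho := hortho (ψ t)
  rw [real_inner_comm] at ho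
  rw [hgt, inner_sub_right, inner_add_right, ho, real_inner_self_eq_norm_sq]
  have := real_inner_le_norm (gradient f (ψ t)) h
  nlinarith [sq_nonneg (‖gradient f (ψ t)‖ - ‖h‖ / 2)]

/-- Grönwall's inequality for an absolutely continuous perturbation `ψ` of the trajectory `φ` of
`b`, where the perturbation `ψ' - b(ψ)` is measured in `L¹`. -/
lemma norm_sub_le_of_action {d : ℕ}
    {b : EuclideanSpace ℝ (Fin d) → EuclideanSpace ℝ (Fin d)}
    {A : Set (EuclideanSpace ℝ (Fin d))} {L : NNReal}
    (hbc : Continuous b) (hL : LipschitzOnWith L b A)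
    {g ψ φ : ℝ → EuclideanSpace ℝ (Fin d)} {x : EuclideanSpace ℝ (Fin d)} {τ : ℝ} (hτ : 0 ≤ τ)
    (hg : IntervalIntegrable g volume 0 τ)
    (hψ : ψ = fun t => x + ∫ s in (0 : ℝ)..t, g s) (hψA : ∀ t ∈ Icc 0 τ, ψ t ∈ A)
    (hφ0 : φ 0 = x) (hφ : ∀ t ∈ Icc (0 : ℝ) τ, HasDerivAt φ (b (φ t)) t)
    (hφA : ∀ t ∈ Icc 0 τ, φ t ∈ A) :
    ‖ψ τ - φ τ‖ ≤ (∫ s in (0 : ℝ)..τ, ‖g s - b (ψ s)‖) * Real.exp (L * τ) := by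
  have hsub : ∀ t ∈ Icc 0 τ, uIcc 0 t ⊆ uIcc 0 τ := fun t ht => by
    rw [uIcc_of_le ht.1, uIcc_of_le hτ]; exact Icc_subset_Icc_right ht.2
  have hψc : ContinuousOn ψ (uIcc 0 τ) := by
    rw [hψ]
    exact continuousOn_const.add (continuousOn_primitive_interval' hg left_mem_uIcc)
  have hφc : ContinuousOn φ (uIcc 0 τ) := by
    rw [uIcc_of_le hτ]
    exact fun t ht => (hφ t ht).continuousAt.continuousWithinAt
  have hbψ := hbc.comp_continuousOn hψc
  have hbφ := hbc.comp_continuousOn hφc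
  have hhi : IntervalIntegrable (fun s => g s - b (ψ s)) volume 0 τ :=
    hg.sub hbψ.intervalIntegrable
  have huc : ContinuousOn (fun s => ‖ψ s - φ s‖) (uIcc 0 τ) := (hψc.sub hφc).norm
  set a := ∫ s in (0 : ℝ)..τ, ‖g s - b (ψ s)‖ with ha
  have ha0 : 0 ≤ a := intervalIntegral.integral_nonneg hτ fun _ _ => norm_nonneg _
  have key : ∀ t ∈ Icc 0 τ, ‖ψ t - φ t‖ ≤ a + L * ∫ s in (0 : ℝ)..t, ‖ψ s - φ s‖ := by
    intro t ht
    have hst := hsub t ht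
    have e1 : φ t = x + ∫ s in (0 : ℝ)..t, b (φ s) := by
      rw [integral_eq_sub_of_hasDerivAt (fun s hs => hφ s ?_) (hbφ.mono hst).intervalIntegrable,
        hφ0]
      · abel
      · have := hst hs; rwa [uIcc_of_le hτ] at this
    have i1 := hg.mono_set hst
    have i2 : IntervalIntegrable (fun s => b (φ s)) volume 0 t :=
      (hbφ.mono hst).intervalIntegrable
    have i3 : IntervalIntegrable (fun s => b (ψ s)) volume 0 t :=
      (hbψ.mono hst).intervalIntegrable
    have e2 : ψ t - φ t = (∫ s in (0 : ℝ)..t, (g s - b (ψ s))) +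
        ∫ s in (0 : ℝ)..t, (b (ψ s) - b (φ s)) := by
      rw [← intervalIntegral.integral_add (hhi.mono_set hst) (i3.sub i2)]
      simp only [sub_add_sub_cancel]
      rw [intervalIntegral.integral_sub i1 i2, e1, hψ]
      simp
    rw [e2]
    refine (norm_add_le _ _).trans (add_le_add ?_ ?_)
    · refine (intervalIntegral.norm_integral_le_integral_norm ht.1).trans ?_
      exact integral_mono_interval le_rfl ht.1 ht.2
        (Eventually.of_forall fun _ => norm_nonneg _) hhi.norm
    · rw [← intervalIntegral.integral_const_mul]
      refine (intervalIntegral.norm_integral_le_integral_norm ht.1).trans ?_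
      refine integral_mono_on ht.1 (i3.sub i2).norm
        ((huc.mono hst).intervalIntegrable.const_mul _) fun s hs => ?_
      have hsτ : s ∈ Icc 0 τ := ⟨hs.1, hs.2.trans ht.2⟩
      simpa [dist_eq_norm] using hL.dist_le_mul _ (hψA s hsτ) _ (hφA s hsτ)
  -- Grönwall, applied to the right-hand side of `key` as a function of `t`.
  set v : ℝ → ℝ := fun t => a + L * ∫ s in (0 : ℝ)..t, ‖ψ s - φ s‖ with hv
  have hv0 : ∀ t ∈ Icc 0 τ, 0 ≤ v t := fun t ht => (norm_nonneg _).trans (key t ht)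
  have hvc : ContinuousOn v (Icc 0 τ) := by
    have := continuousOn_primitive_interval' (huc.intervalIntegrable (μ := volume)) left_mem_uIcc
    rw [uIcc_of_le hτ] at this
    exact continuousOn_const.add (continuousOn_const.mul this)
  have hvd : ∀ t ∈ Ico 0 τ, HasDerivWithinAt v (L * ‖ψ t - φ t‖) (Ici t) t := by
    intro t ht
    have ht' : t ∈ Icc 0 τ := ⟨ht.1, ht.2.le⟩
    refine HasDerivWithinAt.const_add _ (HasDerivWithinAt.const_mul _ ?_)
    rw [uIcc_of_le hτ] at huc
    have hmem : Icc 0 τ ∈ 𝓝[>] t :=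
      mem_of_superset (Ioo_mem_nhdsGT ht.2) fun s hs => ⟨ht.1.trans hs.1.le, hs.2.le⟩
    have hca : ContinuousWithinAt (fun s => ‖ψ s - φ s‖) (Ioi t) t :=
      (huc t ht').mono_of_mem_nhdsWithin hmem
    refine integral_hasDerivWithinAt_right
      ((huc.mono (by rw [uIcc_of_le ht.1]; exact Icc_subset_Icc_right ht.2.le)).intervalIntegrable)
      ⟨Icc 0 τ, hmem, huc.aestronglyMeasurable measurableSet_Icc⟩ hca
  have hgw := norm_le_gronwallBound_of_norm_deriv_right_le (K := L) (ε := 0) (δ := a) hvc hvd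
    (by simp [hv, abs_of_nonneg ha0]) (fun t ht => by
      have ht' : t ∈ Icc 0 τ := ⟨ht.1, ht.2.le⟩
      rw [norm_mul, norm_norm, add_zero, Real.norm_of_nonneg (hv0 t ht'),
        Real.norm_of_nonneg L.coe_nonneg]
      exact mul_le_mul_of_nonneg_left (key t ht') L.coe_nonneg) τ (right_mem_Icc.2 hτ)
  rw [gronwallBound_ε0, sub_zero, Real.norm_of_nonneg (hv0 τ (right_mem_Icc.2 hτ))] at hgw
  exact (key τ (right_mem_Icc.2 hτ)).trans hgw

/-- Cauchy–Schwarz in the linear form `‖h‖ ≤ ε + ‖h‖² / (4 ε)`. -/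
lemma integral_norm_le_linear {F : Type*} [NormedAddCommGroup F] {h : ℝ → F} {τ ε : ℝ}
    (hτ : 0 ≤ τ) (hε : 0 < ε)
    (h1 : IntervalIntegrable h volume 0 τ)
    (h2 : IntervalIntegrable (fun s => ‖h s‖ ^ 2) volume 0 τ) :
    ∫ s in (0 : ℝ)..τ, ‖h s‖ ≤ ε * τ + (∫ s in (0 : ℝ)..τ, ‖h s‖ ^ 2) / (4 * ε) := by
  have hc : IntervalIntegrable (fun _ : ℝ => ε) volume 0 τ := intervalIntegrable_const
  have : ∫ s in (0 : ℝ)..τ, ‖h s‖ ≤ ∫ s in (0 : ℝ)..τ, (ε + ‖h s‖ ^ 2 / (4 * ε)) := by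
    refine integral_mono_on hτ h1.norm (hc.add (h2.div_const _)) fun s _ => ?_
    have : ε + ‖h s‖ ^ 2 / (4 * ε) - ‖h s‖ = (2 * ε - ‖h s‖) ^ 2 / (4 * ε) := by
      field_simp; ring
    have : 0 ≤ (2 * ε - ‖h s‖) ^ 2 / (4 * ε) := by positivity
    linarith
  rw [intervalIntegral.integral_add hc (h2.div_const _), intervalIntegral.integral_div,
    intervalIntegral.integral_const] at this
  simpa [mul_comm] using this

/-- **Lemma 2.3.** Let `z ∈ cl D` with `∇f(z) ≠ 0` and let `φ : [0,T] → cl D` be the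
trajectory of `ẋ = b(x)` starting at `z`.  Then for every `y ∈ cl D` not on this
trajectory with `f(y) > f(φ(T))`, one has `V_{cl D}(z, y) > 0`. -/
theorem stmt16 {d : ℕ}
    (f : EuclideanSpace ℝ (Fin d) → ℝ)
    (ℓ b : EuclideanSpace ℝ (Fin d) → EuclideanSpace ℝ (Fin d))
    (hf : ContDiff ℝ 2 f) (hl : ContDiff ℝ 1 ℓ)
    (hortho : ∀ x, ⟪ℓ x, gradient f x⟫ = 0)
    (hb : b = fun x => -(gradient f x + ℓ x))
    (D : Set (EuclideanSpace ℝ (Fin d))) (hD : Bornology.IsBounded D)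
    (z : EuclideanSpace ℝ (Fin d)) (hz : z ∈ closure D) (hgradz : gradient f z ≠ 0)
    (T : ℝ) (hT : 0 < T)
    (φ : ℝ → EuclideanSpace ℝ (Fin d)) (hφ0 : φ 0 = z)
    (hφ : ∀ t ∈ Set.Icc (0 : ℝ) T, HasDerivAt φ (b (φ t)) t)
    (hφD : ∀ t ∈ Set.Icc (0 : ℝ) T, φ t ∈ closure D)
    (y : EuclideanSpace ℝ (Fin d)) (hy : y ∈ closure D)
    (hynot : y ∉ φ '' Set.Icc (0 : ℝ) T)
    (hfy : f (φ T) < f y) :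
    0 < quasiPot b (closure D) z y := by
  have hb1 : ContDiff ℝ 1 b := by
    have hgrad : ContDiff ℝ 1 (gradient f) :=
      (InnerProductSpace.toDual ℝ (EuclideanSpace ℝ (Fin d))).symm.contDiff.comp
        (hf.fderiv_right (m := 1) (by norm_num))
    rw [hb]
    exact (hgrad.add hl).neg
  obtain ⟨L, hL⟩ := LocallyLipschitzOn.exists_lipschitzOnWith_of_compact hD.isCompact_closure
    (hb1.locallyLipschitz.locallyLipschitzOn (s := closure D))
  have hφc : ContinuousOn φ (Icc 0 T) := fun t ht =>
    (hφ t ht).continuousAt.continuousWithinAt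
  obtain ⟨δ₁, hδ₁, hyφ⟩ : ∃ δ > 0, ∀ t ∈ Icc 0 T, δ ≤ ‖y - φ t‖ := by
    have hcl := (isCompact_Icc.image_of_continuousOn hφc).isClosed
    obtain ⟨δ, hδ, h⟩ := Metric.isOpen_iff.1 hcl.isOpen_compl y hynot
    refine ⟨δ, hδ, fun t ht => not_lt.1 fun hlt => h ?_ (mem_image_of_mem φ ht)⟩
    rwa [Metric.mem_ball, dist_comm, dist_eq_norm]
  set η := (f y - f (φ T)) / 2 with hη
  have hη0 : 0 < η := by rw [hη]; linarith
  obtain ⟨δ₂, hδ₂, hfT⟩ : ∃ δ > 0, ∀ u, ‖u - φ T‖ < δ → f u < f (φ T) + η := by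
    obtain ⟨δ, hδ, h⟩ := Metric.continuousAt_iff.1 (hf.continuous.continuousAt (x := φ T)) η hη0
    refine ⟨δ, hδ, fun u hu => ?_⟩
    have := h (by rwa [dist_eq_norm])
    rw [Real.dist_eq] at this
    linarith [(abs_lt.1 this).2]
  set δ := min δ₁ δ₂ with hδ
  have hδ0 : 0 < δ := lt_min hδ₁ hδ₂
  set M := Real.exp (L * T) with hM
  have hM0 : 0 < M := Real.exp_pos _
  -- With this `ε`, the linear term `ε * T` in the bound on `∫ ‖h‖` accounts for half of `δ`.
  set ε := δ / (2 * M * T) with hε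
  have hε0 : 0 < ε := by positivity
  set c := min (4 * η) (2 * ε * δ / M) with hc
  have hc0 : 0 < c := lt_min (by positivity) (by positivity)
  refine (show 0 < ENNReal.ofReal c / 2 from
    ENNReal.div_pos (by simpa using hc0) (by simp)).trans_le ?_
  unfold quasiPot
  refine le_iInf fun S => le_iInf fun hS => le_iInf fun ψ₀ => le_iInf fun g => le_iInf fun hg =>
    le_iInf fun hψ₀ => le_iInf fun hψA₀ => le_iInf fun hψy₀ => ?_
  unfold pathEnergy
  refine ENNReal.div_le_div_right ?_ 2
  -- `ψ₀` is only constrained on `[0, S]`; `ψ` extends the integral formula to all times.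
  obtain ⟨ψ, hψ⟩ : ∃ ψ : ℝ → EuclideanSpace ℝ (Fin d), ψ = fun t => z + ∫ s in (0 : ℝ)..t, g s := ⟨_, rfl⟩
  have hψψ : ∀ t ∈ Icc 0 S, ψ₀ t = ψ t := fun t ht => by rw [hψ₀ t ht, hψ]
  have hψA : ∀ t ∈ Icc 0 S, ψ t ∈ closure D := fun t ht => hψψ t ht ▸ hψA₀ t ht
  have hψy : ψ S = y := by rw [← hψψ S (right_mem_Icc.2 hS.le), hψy₀]
  rw [setLIntegral_congr_fun (g := fun s => ENNReal.ofReal (‖g s - b (ψ s)‖ ^ 2))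
    measurableSet_Icc (fun s hs => by simp only [hψψ s hs])]
  by_cases hfin : ∫⁻ s in Icc 0 S, ENNReal.ofReal (‖g s - b (ψ s)‖ ^ 2) = ⊤
  · rw [hfin]; exact le_top
  have hgi : IntervalIntegrable g volume 0 S :=
    (intervalIntegrable_iff_integrableOn_Icc_of_le hS.le).2 hg
  have hψc : ContinuousOn ψ (uIcc 0 S) := by
    rw [hψ]
    exact continuousOn_const.add (continuousOn_primitive_interval' hgi left_mem_uIcc)
  have hhi : IntervalIntegrable (fun s => g s - b (ψ s)) volume 0 S :=
    hgi.sub (hb1.continuous.comp_continuousOn hψc).intervalIntegrable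
  have hh2' : IntegrableOn (fun s => ‖g s - b (ψ s)‖ ^ 2) (Icc 0 S) := by
    have hm := ((intervalIntegrable_iff_integrableOn_Icc_of_le hS.le).1 hhi).aestronglyMeasurable
    refine (lintegral_ofReal_ne_top_iff_integrable (hm.norm.pow 2) ?_).1 hfin
    exact Eventually.of_forall fun _ => sq_nonneg _
  have hh2 : IntervalIntegrable (fun s => ‖g s - b (ψ s)‖ ^ 2) volume 0 S :=
    (intervalIntegrable_iff_integrableOn_Icc_of_le hS.le).2 hh2'
  rw [← ofReal_integral_eq_lintegral_ofReal hh2' (Eventually.of_forall fun _ => by positivity),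
    integral_Icc_eq_integral_Ioc, ← intervalIntegral.integral_of_le hS.le]
  refine ENNReal.ofReal_le_ofReal ?_
  set A := ∫ s in (0 : ℝ)..S, ‖g s - b (ψ s)‖ ^ 2 with hA
  have hmono : ∀ r s, 0 ≤ r → r ≤ s → s ≤ S →
      (∫ s in r..s, ‖g s - b (ψ s)‖ ^ 2) ≤ A := fun r s h0 h1 h2 =>
    integral_mono_interval h0 h1 h2 (Eventually.of_forall fun _ => by positivity) hh2
  -- At any time `τ ≤ min S T`, deviating from `φ` by at least `δ` costs `c`.
  have hdev : ∀ τ, 0 ≤ τ → τ ≤ S → τ ≤ T → δ ≤ ‖ψ τ - φ τ‖ → c ≤ A := by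
    intro τ h0 hτS hτT hle
    have hsub : uIcc 0 τ ⊆ uIcc 0 S := by
      rw [uIcc_of_le h0, uIcc_of_le hS.le]; exact Icc_subset_Icc_right hτS
    have h1 := norm_sub_le_of_action hb1.continuous hL h0 (hgi.mono_set hsub) hψ
      (fun t ht => hψA t ⟨ht.1, ht.2.trans hτS⟩) hφ0
      (fun t ht => hφ t ⟨ht.1, ht.2.trans hτT⟩) (fun t ht => hφD t ⟨ht.1, ht.2.trans hτT⟩)
    have h2 := integral_norm_le_linear h0 hε0 (hhi.mono_set hsub) (hh2.mono_set hsub)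
    have h3 : (∫ s in (0 : ℝ)..τ, ‖g s - b (ψ s)‖ ^ 2) / (4 * ε) ≤ A / (4 * ε) := by
      gcongr
      exact hmono 0 τ le_rfl h0 hτS
    have h4 : ε * τ ≤ ε * T := by gcongr
    have hA0 : 0 ≤ A := intervalIntegral.integral_nonneg hS.le fun _ _ => by positivity
    have h5 : δ ≤ (ε * T + A / (4 * ε)) * M := by
      refine hle.trans (h1.trans ?_)
      have hexp : Real.exp (L * τ) ≤ M := by rw [hM]; gcongr
      gcongr
      linarith
    have h6 : ε * T * M = δ / 2 := by rw [hε]; field_simp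
    have h7 : δ / 2 ≤ A / (4 * ε) * M := by linarith [add_mul (ε * T) (A / (4 * ε)) M]
    refine (min_le_right _ _).trans ?_
    rw [div_le_iff₀ hM0]
    have h8 : A / (4 * ε) * M = A * M / (4 * ε) := by ring
    rw [h8, le_div_iff₀ (show 0 < 4 * ε by positivity)] at h7
    linarith
  rcases le_total S T with hST | hTS
  · refine hdev S hS.le le_rfl hST ?_
    rw [hψy]
    exact (min_le_left _ _).trans (hyφ S ⟨hS.le, hST⟩)
  · by_cases hclose : ‖ψ T - φ T‖ < δ
    · have h1 := hfT _ (hclose.trans_le (min_le_right _ _))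
      have hsub : uIcc T S ⊆ uIcc 0 S := by
        rw [uIcc_of_le hTS, uIcc_of_le hS.le]; exact Icc_subset_Icc_left hT.le
      have h2 := increment_le_action (hf.of_le (by norm_num)) hortho hb hT.le hTS hgi hψ
        (hh2.mono_set hsub)
      have h3 := hmono T S hT.le hTS le_rfl
      rw [hψy] at h2
      have h4 : c ≤ 4 * η := min_le_left _ _
      linarith
    · exact hdev T hT.le hTS le_rfl (not_lt.1 hclose)
end

section
/- Assume in addition that f is twice continuously differentiable with all its critical points isolated, that ℓ is continuously differentiable, and that D ⊆ E is a bounded open set with ∇f(x) ≠ 0 for every x in the topological boundary of D. Then for every x ∈ cl(D) with ∇f(x) = 0 and every y ∈ cl(D) with y ≠ x, one has V_{cl(D)}(x,y) > 0 or V_{cl(D)}(y,x) > 0. -/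
/-!
Differentiable subsolutions bound the quasi-potential from below. If `F` is `C¹` and
`DF(z) v ≤ ‖v - b z‖²` for all `z` and `v`, then integrating along a path from `x` to `y` gives
`F y - F x ≤ 2 S(φ)`, hence `F y - F x ≤ 2 V_A(x, y)` for every set `A`
(`le_quasiPot_of_subsolution`). So it is enough to produce such an `F` with `F x < F y`, or one
with `F y < F x`.

Orthogonality makes small multiples of `f` subsolutions: with `v = w + b z` one has
`⟪∇f z, v⟫ = ⟪∇f z, w⟫ - ‖∇f z‖²`, and the negative term leaves room for a perturbation. Let `ψ` be
a bump function equal to `1` near the isolated critical point `x` and to `0` at `y`, supported in a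
ball containing no other critical point. Its derivative lives on a compact annulus where
`∇f ≠ 0`, so `‖Dψ‖ (1 + ‖b‖)` is bounded there by `Q ‖∇f‖` and by `Q ‖∇f‖²`
(`exists_fderiv_bump_le`). Therefore `c ((Q + 1) f ± ψ)` is a subsolution for small `c > 0`.
If `f x ≤ f y`, the choice `- ψ` gives `F x < F y`; if `f y ≤ f x`, the choice `+ ψ` gives
`F y < F x`.
-/


open MeasureTheory
open scoped RealInnerProductSpace ENNReal

open Set Filter Topology
open scoped NNReal

/-- Only dominated increments are needed, so that this covers `h = F ∘ φ` where `F` is Lipschitz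
and `φ` is a vector-valued primitive of `g`. -/
lemma absolutelyContinuousOnInterval_of_dist_le {E : Type*} [NormedAddCommGroup E]
    {g : ℝ → E} {h : ℝ → ℝ} {T : ℝ} {K : ℝ≥0}
    (hg : IntervalIntegrable g volume 0 T)
    (hh : ∀ s ∈ uIcc 0 T, ∀ t ∈ uIcc 0 T, dist (h s) (h t) ≤ K * |∫ r in s..t, ‖g r‖|) :
    AbsolutelyContinuousOnInterval h 0 T := by
  have hG := hg.norm.absolutelyContinuousOnInterval_intervalIntegral (c := 0) left_mem_uIcc
  have hG' := hG.const_mul (K : ℝ)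
  rw [absolutelyContinuousOnInterval_iff] at hG' ⊢
  intro ε hε
  obtain ⟨δ, hδ, H⟩ := hG' ε hε
  refine ⟨δ, hδ, fun E hE hlen => lt_of_le_of_lt (Finset.sum_le_sum fun i hi => ?_) (H E hE hlen)⟩
  obtain ⟨h1, h2⟩ := hE.1 i hi
  refine (hh _ h1 _ h2).trans_eq ?_
  have hsub : ∀ t ∈ uIcc 0 T, IntervalIntegrable (fun r => ‖g r‖) volume 0 t := fun t ht =>
    hg.norm.mono_set (uIcc_subset_uIcc_left ht)
  rw [← intervalIntegral.integral_interval_sub_left (hsub _ h2) (hsub _ h1), Real.dist_eq,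
    ← mul_sub, abs_mul, NNReal.abs_eq, abs_sub_comm]

lemma ofReal_integral_le_lintegral_ofReal {α : Type*} [MeasurableSpace α] {μ : Measure α}
    (u : α → ℝ) : ENNReal.ofReal (∫ a, u a ∂μ) ≤ ∫⁻ a, ENNReal.ofReal (u a) ∂μ := by
  by_cases hu : Integrable u μ
  · rw [integral_eq_lintegral_pos_part_sub_lintegral_neg_part hu]
    refine (ENNReal.ofReal_le_ofReal (sub_le_self _ ENNReal.toReal_nonneg)).trans ?_
    exact ENNReal.ofReal_toReal_le
  · simp [integral_undef hu]

/-- A `C¹` function `F` with `DF(z) v ≤ ‖v - b z‖²` grows along any path by at most twice the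
action. -/
lemma le_quasiPot_of_subsolution {d : ℕ}
    {b : EuclideanSpace ℝ (Fin d) → EuclideanSpace ℝ (Fin d)}
    {F : EuclideanSpace ℝ (Fin d) → ℝ} (hF : ContDiff ℝ 1 F)
    (hFb : ∀ z v, fderiv ℝ F z v ≤ ‖v - b z‖ ^ 2)
    (A : Set (EuclideanSpace ℝ (Fin d))) (x y : EuclideanSpace ℝ (Fin d)) :
    ENNReal.ofReal (F y - F x) / 2 ≤ quasiPot b A x y := by
  unfold quasiPot
  refine le_iInf fun T => le_iInf fun hT => le_iInf fun φ => le_iInf fun g => le_iInf fun hg =>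
    le_iInf fun hφ => le_iInf fun _ => le_iInf fun hφT => ?_
  unfold pathEnergy
  gcongr
  have hgi : IntervalIntegrable g volume 0 T :=
    (intervalIntegrable_iff_integrableOn_Icc_of_le hT.le).2 hg
  -- `Φ` agrees with `φ` on `[0, T]`; the values of `φ` outside that interval are arbitrary.
  set Φ : ℝ → EuclideanSpace ℝ (Fin d) := fun t => x + ∫ s in (0 : ℝ)..t, g s with hΦ
  have hΦinc : ∀ s ∈ uIcc 0 T, ∀ t ∈ uIcc 0 T, dist (Φ s) (Φ t) ≤ |∫ r in s..t, ‖g r‖| := by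
    intro s hs t ht
    have hsub : ∀ t ∈ uIcc 0 T, IntervalIntegrable g volume 0 t := fun t ht =>
      hgi.mono_set (uIcc_subset_uIcc_left ht)
    rw [dist_comm, hΦ]
    simp only [dist_add_left]
    rw [dist_eq_norm, intervalIntegral.integral_interval_sub_left (hsub _ ht) (hsub _ hs)]
    exact intervalIntegral.norm_integral_le_abs_integral_norm
  have hball : ∀ t ∈ uIcc 0 T, Φ t ∈ Metric.closedBall x |∫ r in (0 : ℝ)..T, ‖g r‖| := by
    intro t ht
    have h1 := hΦinc 0 left_mem_uIcc t ht
    have h2 : Φ 0 = x := by simp [hΦ]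
    rw [Metric.mem_closedBall, dist_comm, ← h2]
    refine h1.trans ?_
    exact intervalIntegral.abs_integral_mono_interval
      (uIoc_subset_uIoc_of_uIcc_subset_uIcc (uIcc_subset_uIcc_left ht))
      (Eventually.of_forall fun _ => norm_nonneg _) hgi.norm
  obtain ⟨K, hK⟩ := hF.contDiffOn.exists_lipschitzOnWith (s := Metric.closedBall x
    |∫ r in (0 : ℝ)..T, ‖g r‖|) (by decide) (convex_closedBall _ _) (isCompact_closedBall _ _)
  have hac : AbsolutelyContinuousOnInterval (F ∘ Φ) 0 T := by
    refine absolutelyContinuousOnInterval_of_dist_le (K := K) hgi fun s hs t ht => ?_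
    refine (hK.dist_le_mul _ (hball s hs) _ (hball t ht)).trans ?_
    gcongr
    exact hΦinc s hs t ht
  have hftc := hac.integral_deriv_eq_sub
  have h0 : Φ 0 = x := by simp [hΦ]
  have h1 : Φ T = y := by rw [← hφT, hφ T (right_mem_Icc.2 hT.le)]
  simp only [Function.comp_apply, h0, h1] at hftc
  rw [← hftc, intervalIntegral.integral_of_le hT.le, ← integral_Icc_eq_integral_Ioc]
  refine (ofReal_integral_le_lintegral_ofReal _).trans (lintegral_mono_ae ?_)
  rw [ae_restrict_iff' measurableSet_Icc]
  filter_upwards [hgi.ae_hasDerivAt_integral] with t ht htT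
  have hd : HasDerivAt Φ (g t) t :=
    (ht (by rwa [uIcc_of_le hT.le]) 0 left_mem_uIcc).const_add x
  have hFd : HasDerivAt (F ∘ Φ) (fderiv ℝ F (Φ t) (g t)) t :=
    ((hF.differentiable one_ne_zero (Φ t)).hasFDerivAt).comp_hasDerivAt t hd
  rw [hFd.deriv, hφ t htT]
  exact ENNReal.ofReal_le_ofReal (hFb _ _)

/-- The bump function is locally constant off the annulus `rIn ≤ ‖z - x‖ ≤ rOut`, and on this
compact annulus `G` does not vanish. -/
lemma exists_fderiv_bump_le {d : ℕ} {x : EuclideanSpace ℝ (Fin d)} (ψ : ContDiffBump x)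
    {G b : EuclideanSpace ℝ (Fin d) → EuclideanSpace ℝ (Fin d)}
    (hG : Continuous G) (hb : Continuous b)
    (hne : ∀ z, z ≠ x → dist z x ≤ ψ.rOut → G z ≠ 0) :
    ∃ Q : ℝ, 0 ≤ Q ∧ ∀ z, ‖fderiv ℝ ψ z‖ ≤ Q * ‖G z‖ ∧
      ‖fderiv ℝ ψ z‖ * ‖b z‖ ≤ Q * ‖G z‖ ^ 2 := by
  set S : Set (EuclideanSpace ℝ (Fin d)) := Metric.closedBall x ψ.rOut \ Metric.ball x ψ.rIn
  have hS : IsCompact S := (isCompact_closedBall x ψ.rOut).diff Metric.isOpen_ball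
  have hGS : ∀ z ∈ S, 0 < ‖G z‖ := fun z hz => norm_pos_iff.2 <|
    hne z (fun h => hz.2 (by rw [h]; exact Metric.mem_ball_self ψ.rIn_pos)) hz.1
  have hzero : ∀ z, z ∉ S → fderiv ℝ ψ z = 0 := by
    intro z hz
    by_cases hz1 : z ∈ Metric.ball x ψ.rIn
    · rw [(ψ.eventuallyEq_one_of_mem_ball hz1).fderiv_eq]
      exact fderiv_const_apply (1 : ℝ)
    · have hz2 : z ∉ tsupport ψ := fun h => hz ⟨ψ.tsupport_eq ▸ h, hz1⟩
      exact image_eq_zero_of_notMem_tsupport fun h => hz2 (tsupport_fderiv_subset ℝ h)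
  have hD : Continuous fun z => ‖fderiv ℝ ψ z‖ :=
    ((ψ.contDiff (n := 1)).continuous_fderiv one_ne_zero).norm
  obtain ⟨Q₁, hQ₁⟩ := hS.exists_bound_of_continuousOn
    (f := fun z => ‖fderiv ℝ ψ z‖ / ‖G z‖)
    (hD.continuousOn.div hG.norm.continuousOn fun z hz => (hGS z hz).ne')
  obtain ⟨Q₂, hQ₂⟩ := hS.exists_bound_of_continuousOn
    (f := fun z => ‖fderiv ℝ ψ z‖ * ‖b z‖ / ‖G z‖ ^ 2)
    ((hD.mul hb.norm).continuousOn.div (hG.norm.pow 2).continuousOn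
      fun z hz => (pow_pos (hGS z hz) 2).ne')
  refine ⟨max 0 (max Q₁ Q₂), le_max_left _ _, fun z => ?_⟩
  by_cases hz : z ∈ S
  · have h0 := hGS z hz
    refine ⟨(div_le_iff₀ h0).1 ?_, (div_le_iff₀ (pow_pos h0 2)).1 ?_⟩
    · exact (le_abs_self _).trans ((hQ₁ z hz).trans ((le_max_left _ _).trans (le_max_right _ _)))
    · exact (le_abs_self _).trans ((hQ₂ z hz).trans ((le_max_right _ _).trans (le_max_right _ _)))
  · rw [hzero z hz]
    simp only [norm_zero, zero_mul]
    constructor <;> positivity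

/-- With `c = (2 Q + 1)⁻²`, the functions `c ((Q + 1) f ± ψ)` are subsolutions: writing
`v = w + b z`, the derivative is at most `c ((2 Q + 1) ‖∇f‖ ‖w‖ - ‖∇f‖²) ≤ ‖w‖²`. -/
lemma fderiv_subsolution_le {d : ℕ}
    {f ψ : EuclideanSpace ℝ (Fin d) → ℝ}
    {ℓ b : EuclideanSpace ℝ (Fin d) → EuclideanSpace ℝ (Fin d)}
    (hf : Differentiable ℝ f) (hψ : Differentiable ℝ ψ)
    (hortho : ∀ x, ⟪ℓ x, gradient f x⟫ = 0)
    (hb : b = fun x => -(gradient f x + ℓ x))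
    {Q : ℝ} (hQ0 : 0 ≤ Q)
    (hQ : ∀ z, ‖fderiv ℝ ψ z‖ ≤ Q * ‖gradient f z‖ ∧
      ‖fderiv ℝ ψ z‖ * ‖b z‖ ≤ Q * ‖gradient f z‖ ^ 2)
    {σ : ℝ} (hσ : |σ| = 1) (z v : EuclideanSpace ℝ (Fin d)) :
    fderiv ℝ (fun z => ((2 * Q + 1) ^ 2)⁻¹ * ((Q + 1) * f z + σ * ψ z)) z v
      ≤ ‖v - b z‖ ^ 2 := by
  obtain ⟨w, rfl⟩ : ∃ w, v = w + b z := ⟨v - b z, by simp⟩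
  have hder : fderiv ℝ (fun z => ((2 * Q + 1) ^ 2)⁻¹ * ((Q + 1) * f z + σ * ψ z)) z
      = ((2 * Q + 1) ^ 2)⁻¹ • ((Q + 1) • fderiv ℝ f z + σ • fderiv ℝ ψ z) :=
    ((((hf z).hasFDerivAt.const_mul (Q + 1)).add
      ((hψ z).hasFDerivAt.const_mul σ)).const_mul _).fderiv
  have hfw : fderiv ℝ f z (w + b z) ≤ ‖gradient f z‖ * ‖w‖ - ‖gradient f z‖ ^ 2 := by
    have h1 : ⟪gradient f z, b z⟫ = -‖gradient f z‖ ^ 2 := by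
      rw [hb, inner_neg_right, inner_add_right, real_inner_comm (ℓ z), hortho,
        real_inner_self_eq_norm_sq, add_zero]
    rw [← inner_gradient_left, inner_add_right, h1]
    linarith [real_inner_le_norm (gradient f z) w]
  have hψw : σ * fderiv ℝ ψ z (w + b z)
      ≤ Q * ‖gradient f z‖ * ‖w‖ + Q * ‖gradient f z‖ ^ 2 := by
    calc σ * fderiv ℝ ψ z (w + b z) ≤ |σ * fderiv ℝ ψ z (w + b z)| := le_abs_self _
      _ = ‖fderiv ℝ ψ z (w + b z)‖ := by rw [abs_mul, hσ, one_mul, Real.norm_eq_abs]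
      _ ≤ ‖fderiv ℝ ψ z‖ * (‖w‖ + ‖b z‖) :=
        (ContinuousLinearMap.le_opNorm _ _).trans (by gcongr; exact norm_add_le _ _)
      _ ≤ Q * ‖gradient f z‖ * ‖w‖ + Q * ‖gradient f z‖ ^ 2 := by
        rw [mul_add]
        exact add_le_add (mul_le_mul_of_nonneg_right (hQ z).1 (norm_nonneg _)) (hQ z).2
  rw [hder, add_sub_cancel_right]
  simp only [smul_apply, add_apply, smul_eq_mul]
  rw [inv_mul_le_iff₀ (by positivity)]
  have h3 := mul_le_mul_of_nonneg_left hfw (by linarith : 0 ≤ Q + 1)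
  nlinarith [sq_nonneg ((2 * Q + 1) * ‖w‖ - ‖gradient f z‖), sq_nonneg ((2 * Q + 1) * ‖w‖),
    sq_nonneg ‖gradient f z‖]

/-- **Proposition 2.1 (condition (c)).** Assume the critical points of `f` are isolated and
`∇f ≠ 0` on the boundary of the bounded open set `D`.  Then for every critical point
`x ∈ cl D` of `f` and every `y ∈ cl D` with `y ≠ x`, one has `V_{cl D}(x, y) > 0` or
`V_{cl D}(y, x) > 0`. -/
theorem stmt17 {d : ℕ}
    (f : EuclideanSpace ℝ (Fin d) → ℝ)
    (ℓ b : EuclideanSpace ℝ (Fin d) → EuclideanSpace ℝ (Fin d))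
    (hf : ContDiff ℝ 2 f) (hl : ContDiff ℝ 1 ℓ)
    (hortho : ∀ x, ⟪ℓ x, gradient f x⟫ = 0)
    (hb : b = fun x => -(gradient f x + ℓ x))
    (hiso : ∀ z, gradient f z = 0 →
      ∃ ε > 0, ∀ y, y ≠ z → dist y z < ε → gradient f y ≠ 0)
    (D : Set (EuclideanSpace ℝ (Fin d)))
    (hD : Bornology.IsBounded D) (hDopen : IsOpen D)
    (hbd : ∀ x ∈ frontier D, gradient f x ≠ 0) :
    ∀ x ∈ closure D, gradient f x = 0 →
      ∀ y ∈ closure D, y ≠ x →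
        0 < quasiPot b (closure D) x y ∨ 0 < quasiPot b (closure D) y x := by
  intro x _ hx y _ hyx
  obtain ⟨ε, hε, hεx⟩ := hiso x hx
  have hdist : 0 < dist y x := dist_pos.2 hyx
  -- The support avoids `y` and all critical points other than `x`.
  have hr : 0 < min ε (dist y x) := lt_min hε hdist
  let ψ : ContDiffBump x :=
    ⟨min ε (dist y x) / 4, min ε (dist y x) / 2, by linarith, by linarith⟩
  have hψx : ψ x = 1 := ψ.one_of_mem_closedBall (Metric.mem_closedBall_self ψ.rIn_pos.le)
  have hψy : ψ y = 0 := ψ.zero_of_le_dist (by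
    change min ε (dist y x) / 2 ≤ dist y x
    linarith [min_le_right ε (dist y x)])
  have hgrad : Continuous (gradient f) :=
    (InnerProductSpace.toDual ℝ (EuclideanSpace ℝ (Fin d))).symm.continuous.comp
      (hf.continuous_fderiv two_ne_zero)
  have hbc : Continuous b := hb ▸ (hgrad.add hl.continuous).neg
  obtain ⟨Q, hQ0, hQ⟩ := exists_fderiv_bump_le ψ hgrad hbc fun z hzx hz =>
    hεx z hzx (lt_of_le_of_lt (b := min ε (dist y x) / 2) hz (by
      linarith [min_le_left ε (dist y x)]))
  have hψ : ContDiff ℝ 1 ψ := ψ.contDiff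
  have hf1 : ContDiff ℝ 1 f := hf.of_le one_le_two
  have hpos : ∀ σ : ℝ, |σ| = 1 → ∀ p q : EuclideanSpace ℝ (Fin d),
      0 < (Q + 1) * (f q - f p) + σ * (ψ q - ψ p) → 0 < quasiPot b (closure D) p q := by
    intro σ hσ p q hpq
    refine lt_of_lt_of_le ?_ (le_quasiPot_of_subsolution
      (contDiff_const.mul ((contDiff_const.mul hf1).add (contDiff_const.mul hψ)))
      (fderiv_subsolution_le (hf1.differentiable one_ne_zero) (hψ.differentiable one_ne_zero)
        hortho hb hQ0 hQ hσ) (closure D) p q)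
    refine ENNReal.div_pos (ENNReal.ofReal_pos.2 ?_).ne' ENNReal.ofNat_ne_top
    rw [← mul_sub]
    exact mul_pos (by positivity) (by linarith)
  rcases le_total (f x) (f y) with h | h
  · refine Or.inl (hpos (-1) (by simp) x y ?_)
    rw [hψx, hψy]
    nlinarith
  · refine Or.inr (hpos 1 (by simp) y x ?_)
    rw [hψx, hψy]
    nlinarith
end

section
/- Assume in addition that f and ℓ are smooth (C^∞) and that every critical point of f is nondegenerate (Hess f is invertible wherever ∇f vanishes). Let V := V_E denote the quasi-potential over the whole space, and let x be a critical point of f (∇f(x) = 0). Then the singleton {x} is stable, i.e. V(x,y) > 0 for every y ≠ x, if and only if x is a local minimum of f. -/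
/-!
The nondegeneracy of the critical points enters only through the fact that the critical point `x`
is isolated: the differential of `∇f` at `x` is injective, so `∇f` does not vanish nearby.

If `x` is a local minimum, it is then a strict one, so `f ≥ f x + m` with `m > 0` on a small sphere
around `x` that every path from `x` to `y` must cross. Since `ℓ ⟂ ∇f`,
`‖v - b z‖² = ‖v - ∇f z + ℓ z‖² + 4 ⟪∇f z, v⟫`, and integrating along an absolutely continuous path
shows that the action is at least twice the increase of `f` up to any intermediate time
(`ofReal_two_mul_sub_le_pathEnergy`). Hence `V(x, y) ≥ 2 m`.

If `x` is not a local minimum, there are points `p` arbitrarily close to `x` with `f p < f x`.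
The integral curve of `b` started at `p` costs nothing, satisfies `(f ∘ φ)' = -‖∇f(φ)‖²`, and has to
reach a fixed sphere around `x` that encloses no other critical point (`exists_exit`). By
compactness the exit points accumulate at some `y` on the sphere as `p → x`, and since short
segments have small action, `V(x, y) = 0` (`exists_quasiPot_eq_zero`). No unstable manifold is
needed.
-/

open MeasureTheory
open scoped RealInnerProductSpace ENNReal

open Set Filter Topology

/-! ### The action dominates the increase of `f` -/

theorem AbsolutelyContinuousOnInterval.of_dist_le {X Y : Type*} [PseudoMetricSpace X]
    [PseudoMetricSpace Y] {F : ℝ → X} {H : ℝ → Y} {a c : ℝ}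
    (hH : AbsolutelyContinuousOnInterval H a c)
    (h : ∀ s ∈ uIcc a c, ∀ t ∈ uIcc a c, dist (F s) (F t) ≤ dist (H s) (H t)) :
    AbsolutelyContinuousOnInterval F a c := by
  rw [absolutelyContinuousOnInterval_iff] at hH ⊢
  intro ε hε
  obtain ⟨δ, hδ, hd⟩ := hH ε hε
  refine ⟨δ, hδ, fun E hE hlt => lt_of_le_of_lt ?_ (hd E hE hlt)⟩
  exact Finset.sum_le_sum fun i hi => h _ (hE.1 i hi).1 _ (hE.1 i hi).2

/-- Chain rule for `f` along an absolutely continuous path, as an inequality in `[0, ∞]`: the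
increase of `f` is at most the integral of the positive part of `⟪∇f, g⟫`. -/
theorem ofReal_sub_le_lintegral_comp_primitive {d : ℕ} {f : EuclideanSpace ℝ (Fin d) → ℝ}
    (hf : ContDiff ℝ 1 f) (x : EuclideanSpace ℝ (Fin d))
    {g : ℝ → EuclideanSpace ℝ (Fin d)} {t : ℝ} (ht : 0 ≤ t)
    (hg : IntervalIntegrable g volume 0 t) :
    ENNReal.ofReal (f (x + ∫ s in (0 : ℝ)..t, g s) - f x) ≤
      ∫⁻ s in Ioc 0 t, ENNReal.ofReal ⟪gradient f (x + ∫ u in (0 : ℝ)..s, g u), g s⟫ := by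
  set ψ : ℝ → EuclideanSpace ℝ (Fin d) := fun s => x + ∫ u in (0 : ℝ)..s, g u with hψ
  have hcont : ContinuousOn ψ (uIcc 0 t) :=
    continuousOn_const.add (intervalIntegral.continuousOn_primitive_interval' hg left_mem_uIcc)
  obtain ⟨R, hR⟩ := (isCompact_uIcc.image_of_continuousOn hcont).isBounded.subset_closedBall 0
  obtain ⟨K, hK⟩ := hf.contDiffOn.exists_lipschitzOnWith one_ne_zero
    (convex_closedBall (0 : EuclideanSpace ℝ (Fin d)) R) (isCompact_closedBall _ _)
  have hsub : ∀ s ∈ uIcc 0 t, ∀ s' ∈ uIcc 0 t, IntervalIntegrable g volume s s' :=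
    fun s hs s' hs' => hg.mono_set (uIcc_subset_uIcc hs hs')
  have hAC : AbsolutelyContinuousOnInterval (f ∘ ψ) 0 t := by
    refine AbsolutelyContinuousOnInterval.of_dist_le
      ((hg.norm.absolutelyContinuousOnInterval_intervalIntegral
        (c := 0) left_mem_uIcc).const_mul (K : ℝ)) ?_
    intro s hs s' hs'
    refine (hK.dist_le_mul _ (hR ⟨s, hs, rfl⟩) _ (hR ⟨s', hs', rfl⟩)).trans ?_
    have h0 := left_mem_uIcc (a := (0 : ℝ)) (b := t)
    rw [Real.dist_eq, ← mul_sub, abs_mul, NNReal.abs_eq, dist_eq_norm]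
    gcongr
    rw [hψ, add_sub_add_left_eq_sub,
      intervalIntegral.integral_interval_sub_left (hsub _ h0 _ hs) (hsub _ h0 _ hs'),
      intervalIntegral.integral_interval_sub_left (hsub _ h0 _ hs).norm (hsub _ h0 _ hs').norm]
    exact intervalIntegral.norm_integral_le_abs_integral_norm
  have hFTC := hAC.integral_deriv_eq_sub
  have hψ0 : ψ 0 = x := by simp [hψ]
  have hint : IntegrableOn (deriv (f ∘ ψ)) (Ioc 0 t) :=
    (intervalIntegrable_iff_integrableOn_Ioc_of_le ht).1 hAC.intervalIntegrable_deriv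
  have hder : ∀ᵐ s ∂(volume.restrict (Ioc 0 t)),
      deriv (f ∘ ψ) s = ⟪gradient f (ψ s), g s⟫ := by
    rw [ae_restrict_iff' measurableSet_Ioc]
    filter_upwards [hg.ae_hasDerivAt_integral] with s hs hst
    have h1 : HasDerivAt ψ (g s) s :=
      (hs (by rw [uIcc_of_le ht]; exact Ioc_subset_Icc_self hst) 0 left_mem_uIcc).const_add x
    have h2 := ((hf.differentiable one_ne_zero (ψ s)).hasGradientAt.hasFDerivAt).comp_hasDerivAt s h1
    rw [h2.deriv]
    simp
  calc ENNReal.ofReal (f (ψ t) - f x) = ENNReal.ofReal (∫ s in Ioc 0 t, deriv (f ∘ ψ) s) := by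
        rw [← intervalIntegral.integral_of_le ht, hFTC]; simp [hψ0]
    _ ≤ ENNReal.ofReal (∫ s in Ioc 0 t, max (deriv (f ∘ ψ) s) 0) :=
        ENNReal.ofReal_le_ofReal (integral_mono hint hint.pos_part fun s => le_max_left _ _)
    _ = ∫⁻ s in Ioc 0 t, ENNReal.ofReal (max (deriv (f ∘ ψ) s) 0) :=
        ofReal_integral_eq_lintegral_ofReal hint.pos_part (.of_forall fun s => le_max_right _ _)
    _ = ∫⁻ s in Ioc 0 t, ENNReal.ofReal ⟪gradient f (ψ s), g s⟫ := by
        refine lintegral_congr_ae ?_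
        filter_upwards [hder] with s hs
        simp [hs, ENNReal.ofReal_max]

/-- A path pays at least twice the increase of `f`, at any intermediate time. -/
theorem ofReal_two_mul_sub_le_pathEnergy {d : ℕ} {f : EuclideanSpace ℝ (Fin d) → ℝ}
    (hf : ContDiff ℝ 1 f) {ℓ b : EuclideanSpace ℝ (Fin d) → EuclideanSpace ℝ (Fin d)}
    (hortho : ∀ x, ⟪ℓ x, gradient f x⟫ = 0) (hb : b = fun x => -(gradient f x + ℓ x))
    {x : EuclideanSpace ℝ (Fin d)} {φ g : ℝ → EuclideanSpace ℝ (Fin d)} {T : ℝ}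
    (hg : IntegrableOn g (Icc 0 T)) (hφ : ∀ t ∈ Icc 0 T, φ t = x + ∫ s in (0 : ℝ)..t, g s)
    {t : ℝ} (ht : t ∈ Icc 0 T) :
    ENNReal.ofReal (2 * (f (φ t) - f x)) ≤ pathEnergy b φ g T := by
  have hgt : IntervalIntegrable g volume 0 t :=
    (intervalIntegrable_iff_integrableOn_Icc_of_le ht.1).2 (hg.mono_set (Icc_subset_Icc_right ht.2))
  have hpt : ∀ z v, 4 * ⟪gradient f z, v⟫ ≤ ‖v - b z‖ ^ 2 := by
    intro z v
    -- completing the square, thanks to orthogonality of `ℓ` and `∇f`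
    have e : ‖v - b z‖ ^ 2 = ‖v - gradient f z + ℓ z‖ ^ 2 + 4 * ⟪gradient f z, v⟫ := by
      rw [hb]
      have h := hortho z
      have h' := h
      rw [real_inner_comm] at h'
      simp only [← real_inner_self_eq_norm_sq, inner_sub_left, inner_sub_right, inner_add_left,
        inner_add_right, inner_neg_left, inner_neg_right, h, h']
      rw [real_inner_comm v (gradient f z), real_inner_comm v (ℓ z)]
      ring
    rw [e]; nlinarith [sq_nonneg ‖v - gradient f z + ℓ z‖]
  unfold pathEnergy
  rw [ENNReal.le_div_iff_mul_le (by simp) (by simp)]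
  calc ENNReal.ofReal (2 * (f (φ t) - f x)) * 2
      = ENNReal.ofReal 4 * ENNReal.ofReal (f (x + ∫ s in (0 : ℝ)..t, g s) - f x) := by
        rw [← ENNReal.ofReal_mul (by norm_num), ← hφ t ht,
          show 4 * (f (φ t) - f x) = 2 * (f (φ t) - f x) * 2 by ring,
          ENNReal.ofReal_mul' (q := 2) (by norm_num), ENNReal.ofReal_ofNat]
    _ ≤ ENNReal.ofReal 4 *
        ∫⁻ s in Ioc 0 t, ENNReal.ofReal ⟪gradient f (x + ∫ u in (0 : ℝ)..s, g u), g s⟫ := by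
        gcongr
        exact ofReal_sub_le_lintegral_comp_primitive hf x ht.1 hgt
    _ = ∫⁻ s in Ioc 0 t, ENNReal.ofReal (4 * ⟪gradient f (φ s), g s⟫) := by
        rw [← lintegral_const_mul' _ _ (by simp)]
        refine setLIntegral_congr_fun measurableSet_Ioc fun s hs => ?_
        simp only [hφ s ⟨hs.1.le, hs.2.trans ht.2⟩]
        rw [ENNReal.ofReal_mul (by norm_num)]
    _ ≤ ∫⁻ s in Ioc 0 t, ENNReal.ofReal (‖g s - b (φ s)‖ ^ 2) :=
        lintegral_mono fun s => ENNReal.ofReal_le_ofReal (hpt _ _)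
    _ ≤ ∫⁻ s in Icc 0 T, ENNReal.ofReal (‖g s - b (φ s)‖ ^ 2) :=
        lintegral_mono_set fun s hs => ⟨hs.1.le, hs.2.trans ht.2⟩

theorem quasiPot_pos_of_isLocalMin {d : ℕ} {f : EuclideanSpace ℝ (Fin d) → ℝ}
    (hf : ContDiff ℝ 1 f) {ℓ b : EuclideanSpace ℝ (Fin d) → EuclideanSpace ℝ (Fin d)}
    (hortho : ∀ x, ⟪ℓ x, gradient f x⟫ = 0) (hb : b = fun x => -(gradient f x + ℓ x))
    {x : EuclideanSpace ℝ (Fin d)} (hiso : ∀ᶠ z in 𝓝[≠] x, gradient f z ≠ 0)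
    (hmin : IsLocalMin f x) {y : EuclideanSpace ℝ (Fin d)} (hy : y ≠ x) :
    0 < quasiPot b univ x y := by
  -- a nearby point at the same level would be a local minimum too, hence critical
  have hstrict : ∀ᶠ z in 𝓝 x, z ≠ x → f x < f z := by
    filter_upwards [hmin.eventually_nhds, eventually_nhdsWithin_iff.1 hiso] with z hz hz' hne
    refine lt_of_le_of_ne hz.self_of_nhds fun heq => hz' hne ?_
    have hzmin : IsLocalMin f z := by
      filter_upwards [hz] with w hw
      rwa [← heq]
    simp [gradient, hzmin.fderiv_eq_zero]
  obtain ⟨r, hr, hball⟩ := Metric.nhds_basis_closedBall.eventually_iff.1 hstrict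
  have hyx : 0 < ‖y - x‖ := norm_pos_iff.2 (sub_ne_zero.2 hy)
  set ρ := min r ‖y - x‖ with hρdef
  have hρ : 0 < ρ := lt_min hr hyx
  have hne : (Metric.sphere x ρ).Nonempty := by
    refine ⟨x + (ρ / ‖y - x‖) • (y - x), ?_⟩
    simp [norm_smul, abs_of_pos hρ, hyx.ne']
  obtain ⟨z, hz, hzmin⟩ := (isCompact_sphere x ρ).exists_isMinOn hne hf.continuous.continuousOn
  have hzx : f x < f z := by
    refine hball ?_ ?_
    · exact Metric.sphere_subset_closedBall.trans
        (Metric.closedBall_subset_closedBall (min_le_left _ _)) hz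
    · rintro rfl; simp at hz; exact hρ.ne hz
  refine lt_of_lt_of_le (b := ENNReal.ofReal (2 * (f z - f x)))
    (ENNReal.ofReal_pos.2 (by linarith)) ?_
  refine le_iInf fun T => le_iInf fun hT => le_iInf fun φ => le_iInf fun g => le_iInf fun hg =>
    le_iInf fun hφ => le_iInf fun _ => le_iInf fun hφT => ?_
  have hcont : ContinuousOn φ (Icc 0 T) := by
    have hg' : IntervalIntegrable g volume 0 T :=
      (intervalIntegrable_iff_integrableOn_Icc_of_le hT.le).2 hg
    have := intervalIntegral.continuousOn_primitive_interval' hg' left_mem_uIcc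
    rw [uIcc_of_le hT.le] at this
    exact (continuousOn_const.add this).congr hφ
  have h0 : φ 0 = x := by simpa using hφ 0 ⟨le_rfl, hT.le⟩
  obtain ⟨t, ht, htρ⟩ : ρ ∈ (fun s => ‖φ s - x‖) '' Icc 0 T :=
    intermediate_value_Icc hT.le (hcont.sub continuousOn_const).norm
      ⟨by simp [h0, hρ.le], by simp [hφT, hρdef]⟩
  refine le_trans ?_ (ofReal_two_mul_sub_le_pathEnergy hf hortho hb hg hφ ht)
  have := hzmin (show φ t ∈ Metric.sphere x ρ by simpa [dist_eq_norm] using htρ)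
  simp only [mem_ofPred_eq] at this
  gcongr

/-! ### Paths of small action -/

/-- `CostLE b x y e`: some absolutely continuous path from `x` to `y`, defined on an interval
`[0, T]` with `T > 0`, has action at most `e`. -/
def CostLE {d : ℕ} (b : EuclideanSpace ℝ (Fin d) → EuclideanSpace ℝ (Fin d))
    (x y : EuclideanSpace ℝ (Fin d)) (e : ℝ≥0∞) : Prop :=
  ∃ T : ℝ, 0 < T ∧ ∃ φ g : ℝ → EuclideanSpace ℝ (Fin d), IntegrableOn g (Icc 0 T) ∧
    (∀ t ∈ Icc 0 T, φ t = x + ∫ s in (0 : ℝ)..t, g s) ∧ φ T = y ∧ pathEnergy b φ g T ≤ e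

section Cost

variable {d : ℕ} {b : EuclideanSpace ℝ (Fin d) → EuclideanSpace ℝ (Fin d)}
  {x y z : EuclideanSpace ℝ (Fin d)} {e e' : ℝ≥0∞}

theorem CostLE.quasiPot_le (h : CostLE b x y e) : quasiPot b univ x y ≤ e := by
  obtain ⟨T, hT, φ, g, hg, hφ, hφT, he⟩ := h
  refine le_trans ?_ he
  exact iInf_le_of_le T <| iInf_le_of_le hT <| iInf_le_of_le φ <| iInf_le_of_le g <|
    iInf_le_of_le hg <| iInf_le_of_le hφ <| iInf_le_of_le (fun _ _ => mem_univ _) <|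
    iInf_le_of_le hφT le_rfl

/-- Concatenation of paths: bounds on the action add up. -/
theorem CostLE.trans (h : CostLE b x y e) (h' : CostLE b y z e') : CostLE b x z (e + e') := by
  obtain ⟨T, hT, φ, g, hg, hφ, hφT, he⟩ := h
  obtain ⟨T', hT', φ', g', hg', hφ', hφT', he'⟩ := h'
  set G : ℝ → EuclideanSpace ℝ (Fin d) := fun s => if s ≤ T then g s else g' (s - T) with hG
  set Φ : ℝ → EuclideanSpace ℝ (Fin d) := fun s => if s ≤ T then φ s else φ' (s - T) with hΦ
  have hGl : ∀ s, s ≤ T → G s = g s := fun s hs => if_pos hs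
  have hGr : ∀ s, T < s → G s = g' (s - T) := fun s hs => if_neg hs.not_ge
  have hi : IntervalIntegrable g volume 0 T :=
    (intervalIntegrable_iff_integrableOn_Icc_of_le hT.le).2 hg
  have hi' : IntervalIntegrable g' volume 0 T' :=
    (intervalIntegrable_iff_integrableOn_Icc_of_le hT'.le).2 hg'
  have hGi : IntervalIntegrable G volume 0 T := by
    refine hi.congr fun s hs => ?_
    rw [uIoc_of_le hT.le] at hs
    exact (hGl s hs.2).symm
  have hGi' : ∀ t ∈ Icc 0 T', IntervalIntegrable G volume T (T + t) := by
    intro t ht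
    have h1 : IntervalIntegrable g' volume 0 t :=
      hi'.mono_set (uIcc_subset_uIcc left_mem_uIcc (by rwa [uIcc_of_le hT'.le]))
    have h2 := h1.comp_sub_right T
    rw [zero_add, add_comm] at h2
    refine h2.congr fun s hs => ?_
    rw [uIoc_of_le (by linarith [ht.1])] at hs
    exact (hGr s hs.1).symm
  refine ⟨T + T', by positivity, Φ, G, ?_, ?_, ?_, ?_⟩
  · rw [← intervalIntegrable_iff_integrableOn_Icc_of_le (by positivity)]
    exact hGi.trans (hGi' T' ⟨hT'.le, le_rfl⟩)
  · intro t ht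
    by_cases htT : t ≤ T
    · rw [show Φ t = φ t from if_pos htT, hφ t ⟨ht.1, htT⟩]
      congr 1
      refine intervalIntegral.integral_congr fun s hs => ?_
      rw [uIcc_of_le ht.1] at hs
      exact (hGl s (hs.2.trans htT)).symm
    · have htm : t - T ∈ Icc 0 T' := ⟨by linarith, by linarith [ht.2]⟩
      have e1 : ∫ s in (0 : ℝ)..T, G s = ∫ s in (0 : ℝ)..T, g s :=
        intervalIntegral.integral_congr fun s hs => by
          rw [uIcc_of_le hT.le] at hs; exact hGl s hs.2
      have e2 : ∫ s in T..t, G s = ∫ s in (0 : ℝ)..(t - T), g' s := by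
        rw [← sub_self T, ← intervalIntegral.integral_comp_sub_right (fun s => g' s) T]
        refine intervalIntegral.integral_congr_ae (.of_forall fun s hs => ?_)
        rw [uIoc_of_le (not_le.1 htT).le] at hs
        exact hGr s hs.1
      have hG2 : IntervalIntegrable G volume T t := by simpa using hGi' _ htm
      rw [show Φ t = φ' (t - T) from if_neg htT, hφ' _ htm,
        ← intervalIntegral.integral_add_adjacent_intervals hGi hG2, e1, e2, ← hφT,
        hφ T ⟨hT.le, le_rfl⟩, add_assoc]
  · rw [← hφT', show Φ (T + T') = φ' (T + T' - T) from if_neg (by linarith)]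
    simp
  · refine le_trans ?_ (add_le_add he he')
    unfold pathEnergy
    rw [← ENNReal.add_div]
    gcongr
    rw [← Icc_union_Ioc_eq_Icc hT.le (show T ≤ T + T' by linarith)]
    refine (lintegral_union_le _ _ _).trans (add_le_add (le_of_eq ?_) ?_)
    · refine setLIntegral_congr_fun measurableSet_Icc fun s hs => ?_
      simp only [hGl s hs.2, show Φ s = φ s from if_pos hs.2]
    · have hpre : (fun s : ℝ => s - T) ⁻¹' (Ioc 0 T') = Ioc T (T + T') := by
        simp [add_comm]
      calc ∫⁻ s in Ioc T (T + T'), ENNReal.ofReal (‖G s - b (Φ s)‖ ^ 2)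
          = ∫⁻ s in (fun s : ℝ => s - T) ⁻¹' (Ioc 0 T'),
              ENNReal.ofReal (‖g' (s - T) - b (φ' (s - T))‖ ^ 2) := by
            rw [hpre]
            refine setLIntegral_congr_fun measurableSet_Ioc fun s hs => ?_
            simp only [hGr s hs.1, show Φ s = φ' (s - T) from if_neg hs.1.not_ge]
        _ = ∫⁻ s in Ioc 0 T', ENNReal.ofReal (‖g' s - b (φ' s)‖ ^ 2) :=
            (measurePreserving_sub_right volume T).setLIntegral_comp_preimage_emb
              (measurableEmbedding_subRight T)
              (fun s => ENNReal.ofReal (‖g' s - b (φ' s)‖ ^ 2)) _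
        _ ≤ _ := lintegral_mono_set Ioc_subset_Icc_self

/-- Inside a convex set on which `‖b‖ ≤ M`, a displacement of length at most `δ` costs `O(δ)`:
run along the segment during time `δ`, hence at speed at most `1`. -/
theorem CostLE.of_segment {S : Set (EuclideanSpace ℝ (Fin d))} (hS : Convex ℝ S) {M δ : ℝ}
    (hM : ∀ w ∈ S, ‖b w‖ ≤ M) (hx : x ∈ S) (hy : y ∈ S) (hδ : 0 < δ) (hxy : ‖y - x‖ ≤ δ) :
    CostLE b x y (ENNReal.ofReal (δ * (1 + M) ^ 2)) := by
  have hv : ‖δ⁻¹ • (y - x)‖ ≤ 1 := by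
    rw [norm_smul, norm_inv, Real.norm_of_nonneg hδ.le]
    exact inv_mul_le_one_of_le₀ hxy hδ.le
  have hmem : ∀ s ∈ Icc 0 δ, x + s • δ⁻¹ • (y - x) ∈ S := by
    intro s hs
    rw [smul_smul, ← div_eq_mul_inv]
    exact hS.add_smul_sub_mem hx hy ⟨div_nonneg hs.1 hδ.le, div_le_one_of_le₀ hs.2 hδ.le⟩
  refine ⟨δ, hδ, fun s => x + s • δ⁻¹ • (y - x), fun _ => δ⁻¹ • (y - x), by simp,
    fun t _ => by rw [intervalIntegral.integral_const, sub_zero],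
    by simp [smul_smul, hδ.ne'], ?_⟩
  unfold pathEnergy
  refine ENNReal.div_le_of_le_mul (le_mul_of_le_of_one_le ?_ (by simp))
  calc ∫⁻ s in Icc 0 δ, ENNReal.ofReal (‖δ⁻¹ • (y - x) - b (x + s • δ⁻¹ • (y - x))‖ ^ 2)
      ≤ ∫⁻ s in Icc 0 δ, ENNReal.ofReal ((1 + M) ^ 2) := by
        refine setLIntegral_mono' measurableSet_Icc fun s hs => ENNReal.ofReal_le_ofReal ?_
        gcongr
        exact (norm_sub_le _ _).trans (add_le_add hv (hM _ (hmem s hs)))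
    _ = ENNReal.ofReal (δ * (1 + M) ^ 2) := by
        rw [setLIntegral_const, Real.volume_Icc, sub_zero, mul_comm, ENNReal.ofReal_mul hδ.le]

/-- Following the drift costs nothing. -/
theorem CostLE.of_integralCurve (hb : Continuous b) {φ : ℝ → EuclideanSpace ℝ (Fin d)} {T : ℝ}
    (hT : 0 < T)
    (hφ : ∀ t ∈ Icc 0 T, HasDerivWithinAt φ (b (φ t)) (Icc 0 T) t) :
    CostLE b (φ 0) (φ T) 0 := by
  have hc : ContinuousOn φ (Icc 0 T) := fun t ht => (hφ t ht).continuousWithinAt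
  have hbc : ContinuousOn (fun s => b (φ s)) (Icc 0 T) := hb.comp_continuousOn hc
  refine ⟨T, hT, φ, fun s => b (φ s), hbc.integrableOn_Icc, fun t ht => ?_, rfl, ?_⟩
  · have hsub : Icc 0 t ⊆ Icc 0 T := Icc_subset_Icc_right ht.2
    rw [intervalIntegral.integral_eq_sub_of_hasDerivAt_of_le ht.1 (hc.mono hsub)
      (fun s hs => (hφ s ⟨hs.1.le, hs.2.le.trans ht.2⟩).hasDerivAt
        (Icc_mem_nhds hs.1 (hs.2.trans_le ht.2)))
      ((intervalIntegrable_iff_integrableOn_Icc_of_le ht.1).2 (hbc.mono hsub).integrableOn_Icc)]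
    abel
  · simp [pathEnergy]

end Cost

/-! ### Instability when `x` is not a local minimum -/

/-- A bounded globally Lipschitz field has integral curves on every interval `[0, T]`: the ball of
radius `L * T` in the Picard–Lindelöf theorem is large enough for the solution not to leave it. -/
theorem exists_integralCurve {E : Type*} [NormedAddCommGroup E] [NormedSpace ℝ E]
    [CompleteSpace E] {B : E → E} {K : NNReal} (hK : LipschitzWith K B) {L : NNReal}
    (hL : ∀ z, ‖B z‖ ≤ L) (p : E) {T : ℝ} (hT : 0 ≤ T) :
    ∃ φ : ℝ → E, φ 0 = p ∧ ∀ t ∈ Icc 0 T, HasDerivWithinAt φ (B (φ t)) (Icc 0 T) t := by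
  have h : IsPicardLindelof (fun _ => B) (⟨0, le_rfl, hT⟩ : Icc 0 T) p (L * ⟨T, hT⟩) 0 L K :=
    IsPicardLindelof.of_time_independent (fun z _ => hL z) hK.lipschitzOnWith (by simp [hT]; rfl)
  exact h.exists_eq_forall_mem_Icc_hasDerivWithinAt₀

/-- If `x` is the only critical point in the closed ball of radius `r`, an integral curve of `b`
starting inside the ball at a level of `f` below `f x` reaches the sphere. While it stays in the
ball, `f` decreases along it at rate `‖∇f‖²`, and this rate is bounded below because the set
`{f ≤ f p}` in the ball is compact and contains no critical point; but `f` is bounded below on the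
ball. -/
theorem exists_exit {d : ℕ} {f : EuclideanSpace ℝ (Fin d) → ℝ} (hf : ContDiff ℝ 1 f)
    {ℓ b : EuclideanSpace ℝ (Fin d) → EuclideanSpace ℝ (Fin d)} (hbs : ContDiff ℝ 1 b)
    (hortho : ∀ x, ⟪ℓ x, gradient f x⟫ = 0) (hb : b = fun x => -(gradient f x + ℓ x))
    (hgc : Continuous (gradient f))
    {x p : EuclideanSpace ℝ (Fin d)} {r : ℝ} (hr : 0 < r)
    (hiso : ∀ z ∈ Metric.closedBall x r, gradient f z = 0 → z = x)
    (hp : ‖p - x‖ < r) (hfp : f p < f x) :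
    ∃ y ∈ Metric.sphere x r, CostLE b p y 0 := by
  have hpb : p ∈ Metric.closedBall x r := by simpa [dist_eq_norm] using hp.le
  obtain ⟨z, ⟨hzb, hzp⟩, hz⟩ := ((isCompact_closedBall x r).inter_right
    (isClosed_le hf.continuous continuous_const)).exists_isMinOn (s := _ ∩ {z | f z ≤ f p})
    ⟨p, hpb, le_refl (f p)⟩ hgc.norm.continuousOn
  obtain ⟨w, hwb, hw⟩ := (isCompact_closedBall x r).exists_isMinOn ⟨p, hpb⟩
    hf.continuous.continuousOn
  have hc : 0 < ‖gradient f z‖ := norm_pos_iff.2 fun h0 => by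
    have := hiso z hzb h0
    subst this
    exact absurd hzp (not_le.2 hfp)
  have hwp : f w ≤ f p := hw hpb
  set T := (f p - f w + 1) / ‖gradient f z‖ ^ 2 with hTdef
  have hT : 0 < T := div_pos (by linarith) (by positivity)
  -- the field is cut off outside `closedBall x r` so as to be globally Lipschitz
  let χ : ContDiffBump x := ⟨r, r + 1, hr, by linarith⟩
  have hBs : ContDiff ℝ 1 (fun y => χ y • b y) := χ.contDiff.smul hbs
  have hBc : HasCompactSupport (fun y => χ y • b y) := χ.hasCompactSupport.smul_right
  obtain ⟨K, hK⟩ := hBs.lipschitzWith_of_hasCompactSupport hBc one_ne_zero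
  obtain ⟨L, hL⟩ := hBc.exists_bound_of_continuous hBs.continuous
  obtain ⟨φ, hφ0, hφ⟩ := exists_integralCurve hK (L := L.toNNReal)
    (fun y => (hL y).trans (Real.le_coe_toNNReal L)) p hT.le
  have hχ : ∀ y, ‖y - x‖ ≤ r → χ y • b y = b y := fun y hy => by
    rw [χ.one_of_mem_closedBall (by simpa [dist_eq_norm] using hy), one_smul]
  have hφc : ContinuousOn φ (Icc 0 T) := fun t ht => (hφ t ht).continuousWithinAt
  have hnc : ContinuousOn (fun t => ‖φ t - x‖) (Icc 0 T) := (hφc.sub continuousOn_const).norm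
  obtain ⟨t₀, ht₀, hrt₀⟩ : ∃ t ∈ Icc 0 T, r ≤ ‖φ t - x‖ := by
    by_contra! hin
    have hFc : ContinuousOn (f ∘ φ) (Icc 0 T) := hf.continuous.comp_continuousOn hφc
    have hF : ∀ t ∈ Ioo 0 T, HasDerivAt (f ∘ φ) (-‖gradient f (φ t)‖ ^ 2) t := by
      intro t ht
      have h1 := (hφ t (Ioo_subset_Icc_self ht)).hasDerivAt (Icc_mem_nhds ht.1 ht.2)
      rw [hχ _ (hin t (Ioo_subset_Icc_self ht)).le] at h1
      refine (((hf.differentiable one_ne_zero (φ t)).hasGradientAt.hasFDerivAt).comp_hasDerivAt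
        t h1).congr_deriv ?_
      have h := hortho (φ t)
      rw [real_inner_comm] at h
      rw [InnerProductSpace.toDual_apply_apply, hb, inner_neg_right, inner_add_right, h, add_zero,
        real_inner_self_eq_norm_sq]
    have hanti : AntitoneOn (f ∘ φ) (Icc 0 T) := by
      refine antitoneOn_of_deriv_nonpos (convex_Icc 0 T) hFc ?_ ?_ <;> rw [interior_Icc]
      · exact fun t ht => (hF t ht).differentiableAt.differentiableWithinAt
      · intro t ht
        rw [(hF t ht).deriv]
        exact neg_nonpos.2 (sq_nonneg _)
    have hdec := (convex_Icc 0 T).image_sub_le_mul_sub_of_deriv_le hFc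
      (C := -‖gradient f z‖ ^ 2)
      (by rw [interior_Icc]; exact fun t ht => (hF t ht).differentiableAt.differentiableWithinAt)
      (by
        rw [interior_Icc]
        intro t ht
        have ht' := Ioo_subset_Icc_self ht
        rw [(hF t ht).deriv]
        have hle : f (φ t) ≤ f p := by
          simpa [hφ0] using hanti ⟨le_rfl, hT.le⟩ ht' ht'.1
        have : ‖gradient f z‖ ≤ ‖gradient f (φ t)‖ :=
          hz ⟨by simpa [dist_eq_norm] using (hin t ht').le, hle⟩
        gcongr)
      0 ⟨le_rfl, hT.le⟩ T ⟨hT.le, le_rfl⟩ hT.le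
    have hwT : f w ≤ f (φ T) :=
      hw (by simpa [dist_eq_norm] using (hin T ⟨hT.le, le_rfl⟩).le)
    have hcT : ‖gradient f z‖ ^ 2 * T = f p - f w + 1 := by
      rw [hTdef]; field_simp
    simp only [Function.comp, hφ0] at hdec
    linarith
  -- the first exit time
  obtain ⟨τ, ⟨hτ, hrτ⟩, hleast⟩ : ∃ τ, IsLeast {t | t ∈ Icc 0 T ∧ r ≤ ‖φ t - x‖} τ := by
    refine IsCompact.exists_isLeast ?_ ⟨t₀, ht₀, hrt₀⟩
    exact isCompact_Icc.of_isClosed_subset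
      (hnc.preimage_isClosed_of_isClosed isClosed_Icc isClosed_Ici) fun t ht => ht.1
  have hsub : Icc 0 τ ⊆ Icc 0 T := Icc_subset_Icc_right hτ.2
  have hτr : ‖φ τ - x‖ = r := by
    obtain ⟨s, hs, hsr⟩ := intermediate_value_Icc hτ.1 (hnc.mono hsub)
      ⟨by simpa [hφ0] using hp.le, hrτ⟩
    rw [← le_antisymm hs.2 (hleast ⟨hsub hs, hsr.ge⟩)]
    exact hsr
  have hτ0 : 0 < τ := lt_of_le_of_ne hτ.1 fun h0 => by
    rw [← h0, hφ0] at hrτ; exact absurd hp (not_lt.2 hrτ)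
  have hle : ∀ t ∈ Icc 0 τ, ‖φ t - x‖ ≤ r := by
    intro t ht
    rcases ht.2.eq_or_lt with rfl | hlt
    · exact hτr.le
    · by_contra! hgt
      exact absurd (hleast ⟨hsub ht, hgt.le⟩) (not_le.2 hlt)
  refine ⟨φ τ, by simpa [dist_eq_norm] using hτr, ?_⟩
  rw [← hφ0]
  refine CostLE.of_integralCurve hbs.continuous hτ0 fun t ht => ?_
  rw [← hχ _ (hle t ht)]
  exact (hφ t (hsub ht)).mono hsub

/-- The point `y` is a limit of exit points of integral curves of `b` started at points `p → x`
with `f p < f x`. To go from `x` to `y`, jump to `p`, follow the drift to the sphere, then jump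
to `y`. -/
theorem exists_quasiPot_eq_zero {d : ℕ} {f : EuclideanSpace ℝ (Fin d) → ℝ} (hf : ContDiff ℝ 1 f)
    {ℓ b : EuclideanSpace ℝ (Fin d) → EuclideanSpace ℝ (Fin d)} (hbs : ContDiff ℝ 1 b)
    (hortho : ∀ x, ⟪ℓ x, gradient f x⟫ = 0) (hb : b = fun x => -(gradient f x + ℓ x))
    (hgc : Continuous (gradient f)) {x : EuclideanSpace ℝ (Fin d)}
    (hiso : ∀ᶠ z in 𝓝[≠] x, gradient f z ≠ 0) (hmin : ¬ IsLocalMin f x) :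
    ∃ y, y ≠ x ∧ quasiPot b univ x y = 0 := by
  obtain ⟨r, hr, hball⟩ := Metric.nhds_basis_closedBall.eventually_iff.1
    (eventually_nhdsWithin_iff.1 hiso)
  have hiso' : ∀ z ∈ Metric.closedBall x r, gradient f z = 0 → z = x :=
    fun z hz h0 => by_contra fun hne => hball hz hne h0
  have hp : ∀ n : ℕ, ∃ p, ‖p - x‖ < min r (1 / ((n : ℝ) + 1)) ∧ f p < f x := by
    intro n
    have hpos : 0 < min r (1 / ((n : ℝ) + 1)) := lt_min hr Nat.one_div_pos_of_nat
    obtain ⟨p, hp1, hp2⟩ := ((not_eventually.1 hmin).and_eventually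
      (Metric.ball_mem_nhds x hpos)).exists
    exact ⟨p, by simpa [dist_eq_norm] using hp2, not_le.1 hp1⟩
  choose p hpr hpf using hp
  choose q hq hpq using fun n => exists_exit hf hbs hortho hb hgc hr hiso'
    ((hpr n).trans_le (min_le_left _ _)) (hpf n)
  obtain ⟨y, hy, k, hk, hlim⟩ := (isCompact_sphere x r).tendsto_subseq hq
  obtain ⟨M, hM⟩ := (isCompact_closedBall x r).exists_bound_of_continuousOn
    hbs.continuous.continuousOn
  refine ⟨y, by rintro rfl; simp at hy; exact hr.ne hy, ?_⟩
  have hδ : ∀ δ : ℝ, 0 < δ → quasiPot b univ x y ≤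
      ENNReal.ofReal (δ * (1 + M) ^ 2) + 0 + ENNReal.ofReal (δ * (1 + M) ^ 2) := by
    intro δ hδ
    have h1 : ∀ᶠ n in atTop, ‖p (k n) - x‖ ≤ δ := by
      filter_upwards [hk.tendsto_atTop.eventually
        (tendsto_one_div_add_atTop_nhds_zero_nat.eventually (gt_mem_nhds hδ))] with n hn
      exact (((hpr _).trans_le (min_le_right _ _)).trans hn).le
    have h2 : ∀ᶠ n in atTop, ‖y - q (k n)‖ ≤ δ := by
      filter_upwards [hlim.eventually (Metric.ball_mem_nhds y hδ)] with n hn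
      rw [← dist_eq_norm, dist_comm]
      exact (Metric.mem_ball.1 hn).le
    obtain ⟨n, hn1, hn2⟩ := (h1.and h2).exists
    have hc := convex_closedBall x r
    refine CostLE.quasiPot_le (((CostLE.of_segment hc hM (Metric.mem_closedBall_self hr.le) ?_
      hδ hn1).trans (hpq (k n))).trans (CostLE.of_segment hc hM
        (Metric.sphere_subset_closedBall (hq _)) (Metric.sphere_subset_closedBall hy) hδ hn2))
    simpa [dist_eq_norm] using ((hpr (k n)).trans_le (min_le_left _ _)).le
  have hlim0 : Tendsto (fun δ : ℝ => ENNReal.ofReal (δ * (1 + M) ^ 2) + 0 +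
      ENNReal.ofReal (δ * (1 + M) ^ 2)) (𝓝[>] 0) (𝓝 0) := by
    have : Continuous fun δ : ℝ => ENNReal.ofReal (δ * (1 + M) ^ 2) + 0 +
      ENNReal.ofReal (δ * (1 + M) ^ 2) :=
      (ENNReal.continuous_ofReal.comp (by fun_prop) |>.add continuous_const).add
        (ENNReal.continuous_ofReal.comp (by fun_prop))
    simpa using this.continuousWithinAt.tendsto (x := (0 : ℝ)) (s := Ioi 0)
  exact le_antisymm (ge_of_tendsto hlim0 (eventually_mem_nhdsWithin.mono hδ)) bot_le

/-! ### The equivalence -/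

/-- **Lemma 2.4.** Assume `f` and `ℓ` are smooth with all critical points of `f`
nondegenerate, and let `x` be a critical point of `f`.  Then the singleton `{x}` is stable
for the quasi-potential `V = V_E` over the whole space, i.e. `V(x,y) > 0` for every
`y ≠ x`, if and only if `x` is a local minimum of `f`. -/
theorem stmt18 {d : ℕ}
    (f : EuclideanSpace ℝ (Fin d) → ℝ)
    (ℓ b : EuclideanSpace ℝ (Fin d) → EuclideanSpace ℝ (Fin d))
    (hf : ContDiff ℝ (⊤ : ℕ∞) f) (hl : ContDiff ℝ (⊤ : ℕ∞) ℓ)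
    (hortho : ∀ x, ⟪ℓ x, gradient f x⟫ = 0)
    (hb : b = fun x => -(gradient f x + ℓ x))
    (hnd : ∀ z, gradient f z = 0 → Function.Bijective (fderiv ℝ (gradient f) z))
    (x : EuclideanSpace ℝ (Fin d)) (hx : gradient f x = 0) :
    (∀ y, y ≠ x → 0 < quasiPot b Set.univ x y) ↔ IsLocalMin f x := by
  have hgs : ContDiff ℝ 1 (gradient f) :=
    (InnerProductSpace.toDual ℝ (EuclideanSpace ℝ (Fin d))).symm.contDiff.comp
      ((contDiff_infty.1 hf 2).fderiv_right (m := 1) (by norm_num))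
  have hiso : ∀ᶠ z in 𝓝[≠] x, gradient f z ≠ 0 := by
    obtain ⟨K, -, hK⟩ := (fderiv ℝ (gradient f) x).exists_antilipschitzWith
      (LinearMap.ker_eq_bot.2 (hnd x hx).1)
    exact (hgs.differentiable one_ne_zero x).hasFDerivAt.eventually_ne ⟨K, hK⟩
  have hf1 : ContDiff ℝ 1 f := hf.of_le (mod_cast le_top)
  have hbs : ContDiff ℝ 1 b := hb ▸ (hgs.add (hl.of_le (mod_cast le_top))).neg
  refine ⟨fun h => ?_, fun hmin y hy => quasiPot_pos_of_isLocalMin hf1 hortho hb hiso hmin hy⟩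
  by_contra hmin
  obtain ⟨y, hy, h0⟩ := exists_quasiPot_eq_zero hf1 hbs hortho hb hgs.continuous hiso hmin
  exact (h y hy).ne' h0
end
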